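/- arXiv:2403.07629 — 4 statements merged into one kernel-verified Lean document; each statement's English description precedes it below -/
import Mathlib

section
/- Let T be a doubly-regular tournament of order n = 4t+3 (t ≥ 0 an integer). Then every arc of T lies on exactly 2(t+1)(t−1)t²(16t²−4t−11) directed cycles of length 8. -/
/-- A tournament on the vertex type `V`: for every pair of distinct vertices,
exactly one of the two possible arcs is present. -/
structure Tournament (V : Type*) where
  r : V → V → Prop
  dec : DecidableRel r
  irrefl : ∀ i, ¬ r i i
  total : ∀ i j, i ≠ j → (r i j ↔ ¬ r j i)

attribute [instance] Tournament.dec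

/-- A doubly-regular tournament of order `4t+3`: every pair of distinct vertices
jointly dominates exactly `t` vertices. -/
def Tournament.IsDoublyRegular {V : Type*} (T : Tournament V) (t : ℕ) : Prop :=
  ∀ i j : V, i ≠ j → Nat.card {k : V // T.r i k ∧ T.r j k} = t

namespace DoublyRegular

/-!
Paths are counted as homomorphisms of a pattern of arcs between labels, by inclusion-exclusion over
coincidences of labels. A label meeting at most two arcs is summed out with the degree and
codegree formulas of a doubly regular tournament; the only other pattern that remains is settled
by its antisymmetry. The procedure is run on coefficient lists of polynomials in `t`.
-/

/-- Value at `x` of the polynomial with coefficient list `p`, constant term first. -/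
def polyEval (x : ℤ) : List ℤ → ℤ
  | [] => 0
  | a :: p => a + x * polyEval x p

/-- Sum of two coefficient lists. -/
def polyAdd : List ℤ → List ℤ → List ℤ
  | [], q => q
  | p, [] => p
  | a :: p, b :: q => (a + b) :: polyAdd p q

/-- Product of the linear polynomial `a + b X` with a coefficient list. -/
def polyMulLin (a b : ℤ) (p : List ℤ) : List ℤ :=
  polyAdd (p.map (a * ·)) (0 :: p.map (b * ·))

/-- A list of pairs of labels, read either as arcs or as pairs of labels that must receive
distinct vertices. -/
abbrev Pairs := List (ℕ × ℕ)

/-- Replace the label `y` by `x` in a list of pairs. -/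
def identify (x y : ℕ) (l : Pairs) : Pairs :=
  l.map fun p => (if p.1 = y then x else p.1, if p.2 = y then x else p.2)

/-- Whether a list of arcs contains a loop or two opposite arcs. -/
def hasShortCycle (g : Pairs) : Bool := g.any fun p => g.any fun q => p.1 = q.2 ∧ p.2 = q.1

/-- Labels with an arc to `z`. -/
def inLabels (z : ℕ) (g : Pairs) : List ℕ := ((g.filter (·.2 = z)).map Prod.fst).dedup

/-- Labels with an arc from `z`. -/
def outLabels (z : ℕ) (g : Pairs) : List ℕ := ((g.filter (·.1 = z)).map Prod.snd).dedup

/-- The arcs not incident with `z`. -/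
def removeLabel (z : ℕ) (g : Pairs) : Pairs := g.filter fun p => p.1 ≠ z ∧ p.2 ≠ z

/-- The transitive pattern on `0, x, y, 7`, with the arc `0 → 7` reversed. -/
def diamond (x y : ℕ) : Pairs := [(7, 0), (0, x), (0, y), (x, y), (x, 7), (y, 7)]

/-- Contribution of the assignments that agree on `x` and `y`, in terms of a counting
procedure `count`. -/
def mergeStep (count : List ℕ → Pairs → Pairs → Option (List ℤ)) (x y : ℕ)
    (vars : List ℕ) (ne g : Pairs) : Option (List ℤ) :=
  if hasShortCycle (identify x y g) then some []
  else if x = y then none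
  else if y ∈ vars then count (vars.erase y) (identify x y ne) (identify x y g)
  else if x ∈ vars then count (vars.erase x) (identify y x ne) (identify y x g)
  else none

/-- Sum out a label `z` of total degree at most two. -/
def eliminateStep (count : List ℕ → Pairs → Pairs → Option (List ℤ)) (z : ℕ)
    (vars : List ℕ) (g : Pairs) : Option (List ℤ) :=
  let vars' := vars.erase z
  let g' := removeLabel z g
  match inLabels z g, outLabels z g with
  | [], [] => (count vars' [] g').map (polyMulLin 3 4)
  | [_], [] | [], [_] => (count vars' [] g').map (polyMulLin 1 2)
  | [x], [y] => do
    let p ← count vars' [] g'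
    let q ← count vars' [] ((x, y) :: g')
    let s ← mergeStep count x y vars' [] g'
    return polyAdd (polyMulLin 1 1 p) (polyAdd (polyMulLin (-1) 0 q) (polyMulLin (-1) (-1) s))
  | [x, y], [] | [], [x, y] => do
    let p ← count vars' [] g'
    let s ← mergeStep count x y vars' [] g'
    return polyAdd (polyMulLin 0 1 p) (polyMulLin 1 1 s)
  | _, _ => none

/-- Treat a pattern in which no label can be summed out: orient its arcs increasingly
until it is a diamond. -/
def flipStep (count : List ℕ → Pairs → Pairs → Option (List ℤ))
    (vars : List ℕ) (g : Pairs) : Option (List ℤ) :=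
  match g.find? fun p => p ≠ (7, 0) ∧ p.2 < p.1 with
  | some (x, y) => do
    let g' := g.filter (· ≠ (x, y))
    let p ← count vars [] g'
    let q ← count vars [] ((y, x) :: g')
    let s ← mergeStep count x y vars [] g'
    return polyAdd p (polyAdd (polyMulLin (-1) 0 q) (polyMulLin (-1) 0 s))
  | none =>
    match vars with
    | [] => if ∀ p ∈ g, p = (7, 0) then some [2] else none
    | [x, y] =>
      if [0, 7, x, y].Nodup ∧ g ⊆ diamond x y ∧ diamond x y ⊆ g then some [0, 1, 1] else none
    | _ => none

/-- Coefficients of twice the number of homomorphisms of the pattern `g` that separate the pairs in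
`ne`, as a polynomial in the parameter of a doubly regular tournament. The labels outside `vars`
have prescribed images. The first argument bounds the recursion depth. -/
def patternCount : ℕ → List ℕ → Pairs → Pairs → Option (List ℤ)
  | 0, _, _, _ => none
  | k + 1, vars, ne, g =>
    match ne with
    | (x, y) :: ne' =>
      if x = y then some []
      else do
        let p ← patternCount k vars ne' g
        let s ← mergeStep (patternCount k) x y vars ne' g
        return polyAdd p (polyMulLin (-1) 0 s)
    | [] =>
      if hasShortCycle g then some []
      else
        let degree := fun z => (inLabels z g).length + (outLabels z g).length
        match (vars.find? (degree · ≤ 1)).or (vars.find? (degree · ≤ 2)) with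
        | some z => eliminateStep (patternCount k) z vars g
        | none => flipStep (patternCount k) vars g

/-- The directed 8-cycle. -/
def cyclePattern : Pairs := (List.range 8).map fun k => (k, (k + 1) % 8)

/-- All increasing pairs of labels below 8; those that are close on the cycle come first. -/
def distinctPairs : Pairs :=
  [1, 2, 6, 7, 3, 4, 5].flatMap fun d => (List.range (8 - d)).map fun k => (k, k + d)

section Counting

variable {V : Type*} [Fintype V]

/-- Sum of `f` over all ways to change the values of `e` at the labels in `vars`. -/
def sumOver : List ℕ → ((ℕ → V) → ℤ) → (ℕ → V) → ℤ
  | [], f, e => f e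
  | z :: vars, f, e => sumOver vars (fun v => ∑ a, f (Function.update v z a)) e

lemma sumOver_congr {f f' : (ℕ → V) → ℤ} (h : ∀ v, f v = f' v) (vars : List ℕ) (e : ℕ → V) :
    sumOver vars f e = sumOver vars f' e := by
  rw [funext h]

lemma sumOver_perm {vars vars' : List ℕ} (h : vars.Perm vars') (f : (ℕ → V) → ℤ) (e : ℕ → V) :
    sumOver vars f e = sumOver vars' f e := by
  induction h generalizing f with
  | nil => rfl
  | cons z _ ih => exact ih _
  | swap z w l =>
    by_cases hzw : z = w
    · rw [hzw]
    · refine sumOver_congr (fun v => ?_) l e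
      rw [Finset.sum_comm]
      refine Finset.sum_congr rfl fun a _ => Finset.sum_congr rfl fun b _ => ?_
      rw [Function.update_comm hzw]
  | trans _ _ ih₁ ih₂ => exact (ih₁ f).trans (ih₂ f)

lemma sumOver_erase {vars : List ℕ} {z : ℕ} (hz : z ∈ vars) (f : (ℕ → V) → ℤ) (e : ℕ → V) :
    sumOver vars f e =
      sumOver (vars.erase z) (fun v => ∑ a, f (Function.update v z a)) e :=
  sumOver_perm (List.perm_cons_erase hz) f e

lemma sumOver_add (vars : List ℕ) (f f' : (ℕ → V) → ℤ) (e : ℕ → V) :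
    sumOver vars (fun v => f v + f' v) e = sumOver vars f e + sumOver vars f' e := by
  induction vars generalizing f f' with
  | nil => rfl
  | cons z l ih => simp only [sumOver, Finset.sum_add_distrib, ih]

lemma sumOver_mul (vars : List ℕ) (c : ℤ) (f : (ℕ → V) → ℤ) (e : ℕ → V) :
    sumOver vars (fun v => c * f v) e = c * sumOver vars f e := by
  induction vars generalizing f with
  | nil => rfl
  | cons z l ih => simp only [sumOver, ← Finset.mul_sum, ih]

lemma sumOver_eq_zero {f : (ℕ → V) → ℤ} (h : ∀ v, f v = 0) (vars : List ℕ) (e : ℕ → V) :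
    sumOver vars f e = 0 := by
  rw [sumOver_congr (f' := fun v => 0 * f v) (by simpa using h), sumOver_mul, zero_mul]

lemma polyEval_polyAdd (x : ℤ) (p q : List ℤ) :
    polyEval x (polyAdd p q) = polyEval x p + polyEval x q := by
  induction p generalizing q with
  | nil => simp [polyAdd, polyEval]
  | cons a p ih =>
    cases q with
    | nil => simp [polyAdd, polyEval]
    | cons b q => simp only [polyAdd, polyEval, ih]; ring

lemma polyEval_map_mul (x a : ℤ) (p : List ℤ) :
    polyEval x (p.map (a * ·)) = a * polyEval x p := by
  induction p with
  | nil => simp [polyEval]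
  | cons b p ih => simp only [List.map_cons, polyEval, ih]; ring

lemma polyEval_polyMulLin (x a b : ℤ) (p : List ℤ) :
    polyEval x (polyMulLin a b p) = (a + b * x) * polyEval x p := by
  simp only [polyMulLin, polyEval_polyAdd, polyEval_map_mul, polyEval]; ring

end Counting

section Tournament

variable {V : Type*} (T : Tournament V)

/-- Indicator of the arcs of a tournament. -/
def arc (x y : V) : ℤ := if T.r x y then 1 else 0

lemma not_rel_of_rel {T : Tournament V} {x y : V} (h : T.r x y) : ¬ T.r y x := by
  have hxy : x ≠ y := by rintro rfl; exact T.irrefl x h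
  exact (T.total x y hxy).1 h

lemma arc_swap [DecidableEq V] (x y : V) : arc T y x = 1 - arc T x y - if x = y then 1 else 0 := by
  by_cases hxy : x = y
  · subst hxy; simp [arc, T.irrefl]
  · have := T.total x y hxy
    by_cases h : T.r y x <;> simp_all [arc]

lemma arc_mul_self (x y : V) : arc T x y * arc T x y = arc T x y := by simp [arc]

lemma arc_self (x : V) : arc T x x = 0 := by simp [arc, T.irrefl]

variable {T} [Fintype V] {t : ℕ}

/-- Twice the number of arcs within a set is the number of ordered pairs of distinct elements. -/
lemma two_mul_sum_arc [DecidableEq V] (w : V → ℤ) (hw : ∀ x, w x * w x = w x) :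
    2 * ∑ x, ∑ y, w x * w y * arc T x y = (∑ x, w x) ^ 2 - ∑ x, w x := by
  have hswap : ∑ x, ∑ y, w x * w y * arc T x y = ∑ x, ∑ y, w x * w y * arc T y x := by
    rw [Finset.sum_comm]
    exact Finset.sum_congr rfl fun x _ => Finset.sum_congr rfl fun y _ => by ring
  have hpair : ∀ x y, w x * w y * arc T x y + w x * w y * arc T y x =
      w x * w y - if x = y then w x * w y else 0 := by
    intro x y
    rw [arc_swap T x y]
    split_ifs <;> ring
  rw [two_mul]
  nth_rewrite 2 [hswap]
  simp only [← Finset.sum_add_distrib, hpair, Finset.sum_sub_distrib, Finset.sum_ite_eq,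
    Finset.mem_univ, if_true, hw, pow_two, Finset.sum_mul_sum]

variable (hDR : T.IsDoublyRegular t) (hV : Fintype.card V = 4 * t + 3)

include hDR in
lemma sum_arc_mul_arc_of_ne {x y : V} (hxy : x ≠ y) : ∑ k, arc T x k * arc T y k = t := by
  have h := hDR x y hxy
  rw [Nat.card_eq_fintype_card, Fintype.card_subtype] at h
  rw [← h, Finset.card_filter]
  push_cast
  refine Finset.sum_congr rfl fun k _ => ?_
  by_cases h1 : T.r x k <;> by_cases h2 : T.r y k <;> simp [arc, h1, h2]

include hDR hV in
lemma sum_arc_out (x : V) : ∑ k, arc T x k = 2 * t + 1 := by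
  classical
  have hdeg : ∀ x, ∑ k, arc T x k = 0 ∨ ∑ k, arc T x k = 2 * t + 1 := by
    intro x
    have h := two_mul_sum_arc (T := T) (arc T x) (arc_mul_self T x)
    have h' : ∑ y, ∑ k, arc T x y * arc T x k * arc T y k = (∑ y, arc T x y) * t := by
      rw [Finset.sum_mul]
      refine Finset.sum_congr rfl fun y _ => ?_
      by_cases hxy : x = y
      · subst hxy; simp [arc_self]
      · rw [← sum_arc_mul_arc_of_ne hDR hxy, Finset.mul_sum]
        exact Finset.sum_congr rfl fun k _ => by ring
    rw [h'] at h
    have : (∑ k, arc T x k) * (∑ k, arc T x k - (2 * t + 1)) = 0 := by linarith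
    rcases mul_eq_zero.1 this with h0 | h0
    · exact Or.inl h0
    · exact Or.inr (by linarith)
  have htotal : ∑ x, ∑ k, arc T x k = ∑ _x : V, (2 * t + 1 : ℤ) := by
    have h := two_mul_sum_arc (T := T) (fun _ => 1) (by simp)
    simp only [one_mul, Finset.sum_const, Finset.card_univ, hV, nsmul_eq_mul, mul_one] at h ⊢
    push_cast at h ⊢
    linarith
  refine (Finset.sum_eq_sum_iff_of_le fun x _ => ?_).1 htotal x (Finset.mem_univ x)
  rcases hdeg x with h | h <;> rw [h]
  positivity

include hDR hV in
lemma sum_arc_in [DecidableEq V] (x : V) : ∑ k, arc T k x = 2 * t + 1 := by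
  simp only [arc_swap T x, Finset.sum_sub_distrib, sum_arc_out hDR hV, Finset.sum_const,
    Finset.card_univ, hV, Finset.sum_ite_eq, Finset.mem_univ, if_true]
  ring

include hDR hV in
lemma sum_arc_out_out [DecidableEq V] (x y : V) :
    ∑ k, arc T x k * arc T y k = t + (t + 1) * if x = y then 1 else 0 := by
  by_cases hxy : x = y
  · subst hxy
    simp only [arc_mul_self, sum_arc_out hDR hV, if_true]
    ring
  · simp [sum_arc_mul_arc_of_ne hDR hxy, hxy]

include hDR hV in
lemma sum_arc_out_in [DecidableEq V] (x y : V) :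
    ∑ k, arc T x k * arc T k y =
      (t + 1) - arc T x y - (t + 1) * if x = y then 1 else 0 := by
  simp only [arc_swap T y, mul_sub, mul_one, Finset.sum_sub_distrib, sum_arc_out hDR hV,
    sum_arc_out_out hDR hV, mul_ite, mul_zero, Finset.sum_ite_eq, Finset.mem_univ, if_true]
  split_ifs <;> ring

include hDR hV in
lemma sum_arc_in_in [DecidableEq V] (x y : V) :
    ∑ k, arc T k x * arc T k y = t + (t + 1) * if x = y then 1 else 0 := by
  have : ∀ k, arc T k x * arc T k y = arc T k y - arc T x k * arc T k y -
      if x = k then arc T k y else 0 := by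
    intro k; rw [arc_swap T x k]; split_ifs <;> ring
  simp only [this, Finset.sum_sub_distrib, sum_arc_in hDR hV, sum_arc_out_in hDR hV,
    Finset.sum_ite_eq, Finset.mem_univ, if_true]
  ring

end Tournament

section Soundness

variable {V : Type*} [DecidableEq V] (T : Tournament V)

/-- Indicator that `v` separates the pairs in `ne` and maps the pairs in `g` to arcs. -/
def patternIndicator (T : Tournament V) (ne g : Pairs) (v : ℕ → V) : ℤ :=
  if (∀ p ∈ ne, v p.1 ≠ v p.2) ∧ ∀ p ∈ g, T.r (v p.1) (v p.2) then 1 else 0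

variable {T}

lemma patternIndicator_congr {ne g g' : Pairs} (h : ∀ p, p ∈ g ↔ p ∈ g') (v : ℕ → V) :
    patternIndicator T ne g v = patternIndicator T ne g' v := by
  simp only [patternIndicator, h]

lemma patternIndicator_arc_cons (x y : ℕ) (ne g : Pairs) (v : ℕ → V) :
    patternIndicator T ne ((x, y) :: g) v = arc T (v x) (v y) * patternIndicator T ne g v := by
  simp only [patternIndicator, arc, ite_zero_mul_ite_zero, mul_one, List.forall_mem_cons]
  exact if_congr and_left_comm rfl rfl

lemma patternIndicator_ne_cons (x y : ℕ) (ne g : Pairs) (v : ℕ → V) :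
    patternIndicator T ((x, y) :: ne) g v =
      patternIndicator T ne g v - if v x = v y then patternIndicator T ne g v else 0 := by
  simp only [patternIndicator, List.forall_mem_cons]
  by_cases h : v x = v y
  · rw [if_pos h, sub_self]
    exact if_neg fun hv => hv.1.1 h
  · rw [if_neg h, sub_zero]
    exact if_congr (by simp [h]) rfl rfl

lemma patternIndicator_eq_zero {g : Pairs} (hg : hasShortCycle g) (ne : Pairs) (v : ℕ → V) :
    patternIndicator T ne g v = 0 := by
  simp only [hasShortCycle, List.any_eq_true, decide_eq_true_eq] at hg
  obtain ⟨p, hp, q, hq, h1, h2⟩ := hg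
  refine if_neg fun h => not_rel_of_rel (h.2 p hp) ?_
  rw [h1, h2]
  exact h.2 q hq

lemma patternIndicator_update (x y : ℕ) (ne g : Pairs) (v : ℕ → V) :
    patternIndicator T ne g (Function.update v y (v x)) =
      patternIndicator T (identify x y ne) (identify x y g) v := by
  simp only [patternIndicator, identify, List.forall_mem_map, Function.update_apply, apply_ite v]

lemma patternIndicator_identify {x y : ℕ} {v : ℕ → V} (h : v x = v y) (ne g : Pairs) :
    patternIndicator T ne g v = patternIndicator T (identify x y ne) (identify x y g) v := by
  rw [← patternIndicator_update, h, Function.update_eq_self]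

lemma prod_map_ite {α : Type*} (P : α → Prop) [DecidablePred P] (l : List α) :
    (l.map fun x => if P x then (1 : ℤ) else 0).prod = if ∀ x ∈ l, P x then 1 else 0 := by
  induction l with
  | nil => simp
  | cons a l ih => by_cases h : P a <;> simp [ih, h]

lemma patternIndicator_update_eq_mul {z : ℕ} {g : Pairs} (hg : (z, z) ∉ g) (v : ℕ → V) (a : V) :
    patternIndicator T [] g (Function.update v z a) =
      patternIndicator T [] (removeLabel z g) v *
        (((inLabels z g).map fun x => arc T (v x) a).prod *
          ((outLabels z g).map fun y => arc T a (v y)).prod) := by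
  simp only [arc, prod_map_ite, patternIndicator, ite_zero_mul_ite_zero, mul_one]
  refine if_congr ?_ rfl rfl
  simp only [inLabels, outLabels, removeLabel, List.not_mem_nil, false_imp_iff, implies_true,
    true_and, List.mem_dedup, List.mem_map, List.mem_filter, decide_eq_true_eq, Prod.forall,
    Prod.exists, exists_and_right, exists_eq_right, and_imp]
  constructor
  · intro h
    refine ⟨fun x y hxy hx hy => ?_, fun x hxy => ?_, fun y hxy => ?_⟩
    all_goals
      have := h _ _ hxy
      grind [Function.update_apply]
  · rintro ⟨h0, h1, h2⟩ x y hxy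
    grind [Function.update_apply]

variable [Fintype V]

/-- `count` computes, as a polynomial in `t`, twice the number of homomorphisms of a pattern
extending the prescribed images `e`. -/
def IsSound (T : Tournament V) (t : ℕ) (e : ℕ → V)
    (count : List ℕ → Pairs → Pairs → Option (List ℤ)) : Prop :=
  ∀ vars ne g p, count vars ne g = some p →
    2 * sumOver vars (patternIndicator T ne g) e = polyEval t p

lemma sumOver_coincide {x y : ℕ} (hxy : x ≠ y) {vars : List ℕ} (hy : y ∈ vars) (ne g : Pairs)
    (e : ℕ → V) :
    sumOver vars (fun v => if v x = v y then patternIndicator T ne g v else 0) e =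
      sumOver (vars.erase y) (patternIndicator T (identify x y ne) (identify x y g)) e := by
  rw [sumOver_erase hy]
  refine sumOver_congr (fun v => ?_) _ e
  simp [Function.update_of_ne hxy, patternIndicator_update]

lemma mergeStep_sound {t : ℕ} {e : ℕ → V} {count : List ℕ → Pairs → Pairs → Option (List ℤ)}
    (hcount : IsSound T t e count) {x y : ℕ} {vars : List ℕ} {ne g : Pairs} {p : List ℤ}
    (h : mergeStep count x y vars ne g = some p) :
    2 * sumOver vars (fun v => if v x = v y then patternIndicator T ne g v else 0) e =
      polyEval t p := by
  unfold mergeStep at h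
  split_ifs at h with h1 h2 h3 h4
  · obtain rfl := Option.some.inj h
    rw [sumOver_eq_zero, mul_zero, polyEval]
    intro v
    split_ifs with hv
    · rw [patternIndicator_identify hv, patternIndicator_eq_zero h1]
    · rfl
  · rw [sumOver_coincide h2 h3]
    exact hcount _ _ _ _ h
  · rw [sumOver_congr (f' := fun v => if v y = v x then patternIndicator T ne g v else 0)
      (fun v => by simp only [eq_comm]), sumOver_coincide (Ne.symm h2) h4]
    exact hcount _ _ _ _ h

variable {t : ℕ} (hDR : T.IsDoublyRegular t) (hV : Fintype.card V = 4 * t + 3)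

include hDR hV in
lemma eliminateStep_sound {e : ℕ → V} {count : List ℕ → Pairs → Pairs → Option (List ℤ)}
    (hcount : IsSound T t e count) {z : ℕ} {vars : List ℕ} {g : Pairs} {p : List ℤ}
    (hz : z ∈ vars) (hg : hasShortCycle g = false)
    (h : eliminateStep count z vars g = some p) :
    2 * sumOver vars (patternIndicator T [] g) e = polyEval t p := by
  have hloop : (z, z) ∉ g := by
    intro hmem
    have : hasShortCycle g = true := by
      simp only [hasShortCycle, List.any_eq_true, decide_eq_true_eq]
      exact ⟨_, hmem, _, hmem, rfl, rfl⟩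
    simp [this] at hg
  rw [sumOver_erase hz]
  simp only [patternIndicator_update_eq_mul hloop, ← Finset.mul_sum]
  have hpair : ∀ {x y : ℕ} {a b c : ℤ} {q r s : List ℤ} {F : (ℕ → V) → ℤ},
      (∀ v, F v = a + b * arc T (v x) (v y) + c * if v x = v y then 1 else 0) →
      count (vars.erase z) [] (removeLabel z g) = some q →
      (b = 0 ∧ r = [] ∨ count (vars.erase z) [] ((x, y) :: removeLabel z g) = some r) →
      mergeStep count x y (vars.erase z) [] (removeLabel z g) = some s →
      2 * sumOver (vars.erase z)
        (fun v => patternIndicator T [] (removeLabel z g) v * F v) e =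
        a * polyEval t q + b * polyEval t r + c * polyEval t s := by
    intro x y a b c q r s F hF hq hr hs
    have hsplit : ∀ v, patternIndicator T [] (removeLabel z g) v * F v =
        a * patternIndicator T [] (removeLabel z g) v +
        (b * patternIndicator T [] ((x, y) :: removeLabel z g) v +
        c * if v x = v y then patternIndicator T [] (removeLabel z g) v else 0) := by
      intro v
      rw [hF, patternIndicator_arc_cons]
      split_ifs <;> ring
    rw [sumOver_congr hsplit, sumOver_add, sumOver_add, sumOver_mul, sumOver_mul, sumOver_mul,
      ← hcount _ _ _ _ hq, ← mergeStep_sound hcount hs]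
    rcases hr with ⟨rfl, rfl⟩ | hr
    · ring
    · rw [← hcount _ _ _ _ hr]
      ring
  have hconst : ∀ {a b : ℤ} {F : (ℕ → V) → ℤ}, (∀ v, F v = a + b * t) →
      (count (vars.erase z) [] (removeLabel z g)).map (polyMulLin a b) = some p →
      2 * sumOver (vars.erase z)
        (fun v => patternIndicator T [] (removeLabel z g) v * F v) e = polyEval t p := by
    intro a b F hF hp
    obtain ⟨q, hq, rfl⟩ := Option.map_eq_some_iff.1 hp
    simp only [hF, mul_comm _ (a + b * (t : ℤ)), sumOver_mul]
    rw [polyEval_polyMulLin, ← hcount _ _ _ _ hq]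
    ring
  unfold eliminateStep at h
  simp only [Option.bind_eq_bind, Option.pure_def] at h
  split at h
  next hin hout =>
    refine hconst (fun v => ?_) h
    simp [hin, hout, hV]; ring
  next x hin hout =>
    refine hconst (fun v => ?_) h
    simp [hin, hout, sum_arc_out hDR hV]; ring
  next y hin hout =>
    refine hconst (fun v => ?_) h
    simp [hin, hout, sum_arc_in hDR hV]; ring
  next x y hin hout =>
    simp only [Option.bind_eq_some_iff, Option.some.injEq] at h
    obtain ⟨q, hq, r, hr, s, hs, rfl⟩ := h
    rw [hpair (a := t + 1) (b := -1) (c := -(t + 1)) (fun v => ?_) hq (.inr hr) hs]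
    · simp only [polyEval_polyAdd, polyEval_polyMulLin]; ring
    · simp only [hin, hout, List.map_cons, List.map_nil, List.prod_cons, List.prod_nil, mul_one,
        sum_arc_out_in hDR hV]
      ring
  next x y hin hout =>
    simp only [Option.bind_eq_some_iff, Option.some.injEq] at h
    obtain ⟨q, hq, s, hs, rfl⟩ := h
    rw [hpair (a := t) (b := 0) (c := t + 1) (fun v => ?_) hq (.inl ⟨rfl, rfl⟩) hs]
    · simp only [polyEval_polyAdd, polyEval_polyMulLin]; ring
    · simp only [hin, hout, List.map_cons, List.map_nil, List.prod_cons, List.prod_nil, mul_one,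
        sum_arc_out_out hDR hV]
      ring
  next x y hin hout =>
    simp only [Option.bind_eq_some_iff, Option.some.injEq] at h
    obtain ⟨q, hq, s, hs, rfl⟩ := h
    rw [hpair (a := t) (b := 0) (c := t + 1) (fun v => ?_) hq (.inl ⟨rfl, rfl⟩) hs]
    · simp only [polyEval_polyAdd, polyEval_polyMulLin]; ring
    · simp only [hin, hout, List.map_cons, List.map_nil, List.prod_cons, List.prod_nil, mul_one,
        one_mul, sum_arc_in_in hDR hV]
      ring
  next => simp at h

include hDR hV in
lemma two_mul_sumOver_diamond {e : ℕ → V} (he : T.r (e 7) (e 0)) {x y : ℕ}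
    (hxy : [0, 7, x, y].Nodup) :
    2 * sumOver [x, y] (patternIndicator T [] (diamond x y)) e = t * (t + 1) := by
  have he1 : arc T (e 7) (e 0) = 1 := if_pos he
  have hsum : ∑ a, arc T (e 0) a * arc T a (e 7) = t + 1 := by
    have hne : e 0 ≠ e 7 := fun h => T.irrefl (e 0) (by rwa [← h] at he)
    rw [sum_arc_out_in hDR hV, arc_swap T (e 7) (e 0), he1]
    simp [hne, hne.symm]
  have h := two_mul_sum_arc (T := T) (fun a => arc T (e 0) a * arc T a (e 7))
    (fun a => by rw [mul_mul_mul_comm, arc_mul_self, arc_mul_self])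
  rw [hsum, Finset.sum_comm] at h
  rw [show (t : ℤ) * (t + 1) = (t + 1) ^ 2 - (t + 1) by ring, ← h]
  simp only [List.nodup_cons, List.mem_cons, List.not_mem_nil, or_false, not_or] at hxy
  obtain ⟨⟨_, h0x, h0y⟩, ⟨h7x, h7y⟩, hxy, _⟩ := hxy
  have hnil : ∀ v, patternIndicator T [] [] v = 1 := fun v => by simp [patternIndicator]
  congr 1
  refine Finset.sum_congr rfl fun b _ => Finset.sum_congr rfl fun a _ => ?_
  simp only [diamond, patternIndicator_arc_cons, hnil, Function.update_self,
    Function.update_of_ne h0x, Function.update_of_ne h0y, Function.update_of_ne h7x,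
    Function.update_of_ne h7y, Function.update_of_ne (Ne.symm hxy), he1]
  ring

include hDR hV in
lemma flipStep_sound {e : ℕ → V} (he : T.r (e 7) (e 0))
    {count : List ℕ → Pairs → Pairs → Option (List ℤ)} (hcount : IsSound T t e count)
    {vars : List ℕ} {g : Pairs} {p : List ℤ} (h : flipStep count vars g = some p) :
    2 * sumOver vars (patternIndicator T [] g) e = polyEval t p := by
  unfold flipStep at h
  simp only [Option.bind_eq_bind, Option.pure_def] at h
  split at h
  next x y hxy =>
    simp only [Option.bind_eq_some_iff, Option.some.injEq] at h
    obtain ⟨q, hq, r, hr, s, hs, rfl⟩ := h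
    have hmem : (x, y) ∈ g := List.mem_of_find?_eq_some hxy
    set g' := g.filter (· ≠ (x, y)) with hg'
    have hsplit : ∀ v, patternIndicator T [] g v = patternIndicator T [] g' v +
        (-1 * patternIndicator T [] ((y, x) :: g') v +
        -1 * if v x = v y then patternIndicator T [] g' v else 0) := by
      intro v
      rw [patternIndicator_congr (g' := (x, y) :: g') fun p => by grind,
        patternIndicator_arc_cons, patternIndicator_arc_cons, arc_swap T (v x) (v y)]
      split_ifs <;> ring
    rw [sumOver_congr hsplit, sumOver_add, sumOver_add, sumOver_mul, sumOver_mul]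
    simp only [polyEval_polyAdd, polyEval_polyMulLin, ← hcount _ _ _ _ hq, ← hcount _ _ _ _ hr,
      ← mergeStep_sound hcount hs]
    ring
  next =>
    split at h
    next =>
      split_ifs at h with hg
      obtain rfl := Option.some.inj h
      have : patternIndicator T [] g e = 1 := if_pos ⟨by simp, fun p hp => by rwa [hg p hp]⟩
      simp [sumOver, this, polyEval]
    next x y =>
      split_ifs at h with hg
      obtain rfl := Option.some.inj h
      rw [sumOver_congr (patternIndicator_congr fun p => ⟨@hg.2.1 p, @hg.2.2 p⟩),
        two_mul_sumOver_diamond hDR hV he hg.1]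
      simp only [polyEval]
      ring
    next => simp at h

include hDR hV in
lemma patternCount_sound {e : ℕ → V} (he : T.r (e 7) (e 0)) (k : ℕ) :
    IsSound T t e (patternCount k) := by
  induction k with
  | zero => intro vars ne g p h; simp [patternCount] at h
  | succ k ih =>
    intro vars ne g p h
    unfold patternCount at h
    simp only [Option.bind_eq_bind, Option.pure_def] at h
    split at h
    next x y ne' =>
      split_ifs at h with hxy
      · obtain rfl := Option.some.inj h
        rw [sumOver_eq_zero, mul_zero, polyEval]
        intro v
        simp [patternIndicator_ne_cons, hxy]
      · simp only [Option.bind_eq_some_iff, Option.some.injEq] at h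
        obtain ⟨q, hq, s, hs, rfl⟩ := h
        simp only [polyEval_polyAdd, polyEval_polyMulLin, ← ih _ _ _ _ hq,
          ← mergeStep_sound ih hs]
        rw [sumOver_congr (f' := fun v => patternIndicator T ne' g v +
          -1 * if v x = v y then patternIndicator T ne' g v else 0) fun v => by
            rw [patternIndicator_ne_cons]; ring, sumOver_add, sumOver_mul]
        ring
    next =>
      split_ifs at h with hg
      · obtain rfl := Option.some.inj h
        rw [sumOver_eq_zero fun v => patternIndicator_eq_zero hg [] v, mul_zero, polyEval]
      · split at h
        next z hz =>
          refine eliminateStep_sound hDR hV ih ?_ (by simpa using hg) h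
          rcases Option.or_eq_some_iff.1 hz with hz | ⟨_, hz⟩
          all_goals exact List.mem_of_find?_eq_some hz
        next => exact flipStep_sound hDR hV he ih h

end Soundness

set_option maxRecDepth 10000 in
lemma patternCount_eight_cycle :
    patternCount 60 [1, 2, 3, 4, 5, 6] distinctPairs cyclePattern =
      some [0, 0, 44, 16, -108, -16, 64] := by
  decide +kernel

lemma mem_distinctPairs (p : ℕ × ℕ) : p ∈ distinctPairs ↔ p.1 < p.2 ∧ p.2 < 8 := by
  obtain ⟨a, b⟩ := p
  constructor
  · revert a b
    simp only [← Prod.forall (p := fun p : ℕ × ℕ => p ∈ distinctPairs → p.1 < p.2 ∧ p.2 < 8)]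
    decide
  · rintro ⟨h1, h2⟩
    simp only at h1 h2
    interval_cases b <;> interval_cases a <;> decide

/-- The images of the labels `0, ..., 7`. -/
def restrictEight {V : Type*} (v : ℕ → V) : Fin 8 → V := fun k => v k

lemma patternIndicator_cycle {V : Type*} [DecidableEq V] (T : Tournament V) {v : ℕ → V}
    (h70 : T.r (v 7) (v 0)) :
    patternIndicator T distinctPairs cyclePattern v =
      if Function.Injective (restrictEight v) ∧
        ∀ k : Fin 7, T.r (restrictEight v k.castSucc) (restrictEight v k.succ) then 1 else 0 := by
  refine if_congr (and_congr ?_ ?_) rfl rfl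
  · simp only [mem_distinctPairs]
    constructor
    · intro h a b hab
      by_contra hne
      rcases lt_or_gt_of_ne hne with hlt | hlt
      · exact h (a, b) ⟨hlt, b.2⟩ hab
      · exact h (b, a) ⟨hlt, a.2⟩ hab.symm
    · rintro h p ⟨h1, h2⟩ hp
      have := @h ⟨p.1, h1.trans h2⟩ ⟨p.2, h2⟩ hp
      simp only [Fin.mk.injEq] at this
      exact h1.ne this
  · simp [cyclePattern, restrictEight, List.range_succ, Fin.forall_fin_succ, h70]

/-- Paths of length 7 from `i` to `j` are determined by their inner vertices, listed from last
to first. -/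
lemma card_path_eq_sumOver {V : Type*} [DecidableEq V] [Fintype V] (T : Tournament V) {i j : V}
    (hji : T.r j i) :
    (Nat.card {v : Fin 8 → V // Function.Injective v ∧ v 0 = i ∧ v 7 = j ∧
        ∀ k : Fin 7, T.r (v k.castSucc) (v k.succ)} : ℤ) =
      sumOver [1, 2, 3, 4, 5, 6] (patternIndicator T distinctPairs cyclePattern)
        (fun k => if k = 0 then i else j) := by
  let path : V × V × V × V × V × V → Fin 8 → V :=
    fun (a₆, a₅, a₄, a₃, a₂, a₁) => ![i, a₁, a₂, a₃, a₄, a₅, a₆, j]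
  have hpath : ∀ v : Fin 8 → V, v 0 = i → v 7 = j →
      path (v 6, v 5, v 4, v 3, v 2, v 1) = v := by
    rintro v rfl rfl
    ext k
    fin_cases k <;> rfl
  let inner : {v : Fin 8 → V // Function.Injective v ∧ v 0 = i ∧ v 7 = j ∧
        ∀ k : Fin 7, T.r (v k.castSucc) (v k.succ)} ≃
      {a // Function.Injective (path a) ∧
        ∀ k : Fin 7, T.r (path a k.castSucc) (path a k.succ)} :=
    { toFun := fun v => ⟨(v.1 6, v.1 5, v.1 4, v.1 3, v.1 2, v.1 1), by
        rw [hpath v.1 v.2.2.1 v.2.2.2.1]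
        exact ⟨v.2.1, v.2.2.2.2⟩⟩
      invFun := fun a => ⟨path a.1, a.2.1, rfl, rfl, a.2.2⟩
      left_inv := fun v => Subtype.ext (hpath v.1 v.2.2.1 v.2.2.2.1)
      right_inv := fun a => rfl }
  rw [Nat.card_congr inner, Nat.card_eq_fintype_card, Fintype.card_subtype, Finset.card_filter]
  push_cast
  simp only [Fintype.sum_prod_type, sumOver]
  refine Finset.sum_congr rfl fun a₆ _ => Finset.sum_congr rfl fun a₅ _ =>
    Finset.sum_congr rfl fun a₄ _ => Finset.sum_congr rfl fun a₃ _ =>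
    Finset.sum_congr rfl fun a₂ _ => Finset.sum_congr rfl fun a₁ _ => ?_
  rw [patternIndicator_cycle T (by simpa [Function.update_apply] using hji)]
  congr! with k
  all_goals
    funext k
    fin_cases k <;> rfl

end DoublyRegular

theorem eight_cycles_through_arc_of_doubly_regular
    (t : ℕ) (T : Tournament (Fin (4 * t + 3)))
    (hDR : T.IsDoublyRegular t)
    (i j : Fin (4 * t + 3)) (harc : T.r j i) :
    -- the 8-cycles through the arc (j,i) correspond bijectively to the
    -- paths of length 7 from i to j
    (Nat.card {v : Fin 8 → Fin (4 * t + 3) //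
        Function.Injective v ∧ v 0 = i ∧ v 7 = j ∧
        ∀ k : Fin 7, T.r (v k.castSucc) (v k.succ)} : ℤ)
      = 2 * ((t : ℤ) + 1) * ((t : ℤ) - 1) * (t : ℤ) ^ 2 *
          (16 * (t : ℤ) ^ 2 - 4 * (t : ℤ) - 11) := by
  have hcount := DoublyRegular.patternCount_sound hDR (Fintype.card_fin _)
    (e := fun k => if k = 0 then i else j) harc 60 _ _ _ _ DoublyRegular.patternCount_eight_cycle
  rw [← DoublyRegular.card_path_eq_sumOver T harc] at hcount
  simp only [DoublyRegular.polyEval] at hcount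
  refine mul_left_cancel₀ (two_ne_zero (α := ℤ)) ?_
  linear_combination hcount
end

section
/- For any doubly-regular tournament DR_n of order n (so n ≡ 3 mod 4), the number of 8-cycles satisfies c_8(DR_n) = (n+1)·n·(n−1)·(n−3)²·(n−7)·(n²−7n+1)/2048. -/
/-- The number of directed `m`-cycles of the relation `r`: each `m`-cycle corresponds
to exactly `m` injective cyclic sequences (one for each rotation). -/
noncomputable def numCycles {V : Type*} (r : V → V → Prop) (m : ℕ) : ℕ :=
  Nat.card {γ : ZMod m → V // Function.Injective γ ∧ ∀ k, r (γ k) (γ (k + 1))} / m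

section ClosedWalkCounts

open Finset

/-- The adjacency matrix of a doubly-regular tournament of order `4 * t + 3`. -/
structure IsDoublyRegularMatrix {V : Type*} [Fintype V] (a : V → V → ℤ) (t : ℤ) : Prop where
  zero_or_one : ∀ x y, a x y = 0 ∨ a x y = 1
  diag : ∀ x, a x x = 0
  add_swap : ∀ x y, x ≠ y → a x y + a y x = 1
  card_eq : (Fintype.card V : ℤ) = 4 * t + 3
  common_out : ∀ x y, x ≠ y → ∑ z, a x z * a y z = t

namespace IsDoublyRegularMatrix

variable {V : Type*} [Fintype V] {a : V → V → ℤ} {t : ℤ}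

lemma mul_self (h : IsDoublyRegularMatrix a t) (x y : V) : a x y * a x y = a x y := by
  rcases h.zero_or_one x y with e | e <;> simp [e]

lemma mul_swap (h : IsDoublyRegularMatrix a t) (x y : V) : a x y * a y x = 0 := by
  by_cases hxy : x = y
  · simp [hxy, h.diag]
  · have := h.add_swap x y hxy
    rcases h.zero_or_one x y with e | e <;> simp [e] at this ⊢
    exact this

variable [DecidableEq V]

lemma swap_eq (h : IsDoublyRegularMatrix a t) (x y : V) :
    a y x = 1 - (if x = y then 1 else 0) - a x y := by
  split_ifs with hxy
  · simp [hxy, h.diag]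
  · linarith [h.add_swap x y hxy]

lemma sum_out_add_sum_in (h : IsDoublyRegularMatrix a t) (x : V) :
    ∑ y, a x y + ∑ y, a y x = 4 * t + 2 := by
  have : ∀ y, a y x = 1 - (if x = y then 1 else 0) - a x y := fun y => h.swap_eq x y
  simp only [this, sum_sub_distrib, sum_const, card_univ, sum_ite_eq, mem_univ, if_true,
    nsmul_eq_mul, h.card_eq]
  ring

lemma sum_in (h : IsDoublyRegularMatrix a t) (x : V) : ∑ y, a y x = 2 * t + 1 := by
  have total : 2 * ∑ x, ∑ y, a y x = (4 * t + 3) * (4 * t + 2) := by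
    have e := sum_congr rfl fun x (_ : x ∈ univ) => h.sum_out_add_sum_in x
    rw [sum_add_distrib, sum_comm] at e
    simp only [sum_const, card_univ, nsmul_eq_mul, h.card_eq] at e
    linarith
  have squares : ∑ x, (∑ y, a y x) ^ 2
      = ∑ x, ∑ y, a y x + (4 * t + 3) * (4 * t + 2) * t := by
    have e1 : ∑ x, (∑ y, a y x) ^ 2 = ∑ y, ∑ z, ∑ x, a y x * a z x := by
      simp only [sq, sum_mul_sum]
      rw [sum_comm]
      exact sum_congr rfl fun y _ => sum_comm
    have e2 : ∀ y z, ∑ x, a y x * a z x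
        = t + (if y = z then ∑ x, a y x - t else 0) := by
      intro y z
      split_ifs with hyz
      · subst hyz
        simp [h.mul_self]
      · simp [h.common_out y z hyz]
    rw [e1, sum_comm (f := fun x y => a y x)]
    simp only [e2, sum_add_distrib, sum_ite_eq, mem_univ, if_true, sum_sub_distrib, sum_const,
      card_univ, nsmul_eq_mul, h.card_eq]
    ring
  have var : ∑ x, (∑ y, a y x - (2 * t + 1)) ^ 2 = 0 := by
    simp only [sub_sq, sum_add_distrib, sum_sub_distrib, sum_const, card_univ, nsmul_eq_mul,
      h.card_eq, ← sum_mul, ← mul_sum, squares]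
    have total' : ∑ x, ∑ y, a y x = (4 * t + 3) * (2 * t + 1) := by linarith
    linear_combination (-4 * t - 1) * total'
  have := (sum_eq_zero_iff_of_nonneg fun x _ => sq_nonneg _).1 var x (mem_univ x)
  linarith [pow_eq_zero_iff (two_ne_zero) |>.1 this]

lemma sum_out (h : IsDoublyRegularMatrix a t) (x : V) : ∑ y, a x y = 2 * t + 1 := by
  linarith [h.sum_out_add_sum_in x, h.sum_in x]

lemma two_path (h : IsDoublyRegularMatrix a t) {x y : V} (hxy : x ≠ y) :
    ∑ z, a x z * a z y = t + 1 - a x y := by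
  have : ∀ z, a z y = 1 - (if y = z then 1 else 0) - a y z := fun z => h.swap_eq y z
  simp only [this, mul_sub, sum_sub_distrib, mul_one, mul_ite, mul_zero, sum_ite_eq, mem_univ,
    if_true, h.sum_out, h.common_out x y hxy]
  ring

omit [DecidableEq V] in
lemma two_path_self (h : IsDoublyRegularMatrix a t) (x : V) : ∑ z, a x z * a z x = 0 := by
  simp [h.mul_swap]

lemma common_in (h : IsDoublyRegularMatrix a t) {x y : V} (hxy : x ≠ y) :
    ∑ z, a z x * a z y = t := by
  have : ∀ z, a z x = 1 - (if x = z then 1 else 0) - a x z := fun z => h.swap_eq x z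
  simp only [this, sub_mul, sum_sub_distrib, one_mul, ite_mul, zero_mul, sum_ite_eq, mem_univ,
    if_true, h.sum_in, h.two_path hxy]
  ring

end IsDoublyRegularMatrix

section DistinctQuadruples

variable {V : Type*} [Fintype V] [DecidableEq V]

/-- The sum of `f` over quadruples of distinct vertices. -/
def distinctSum (f : V → V → V → V → ℤ) : ℤ :=
  ∑ a, ∑ b, ∑ c, ∑ d,
    if a ≠ b ∧ a ≠ c ∧ a ≠ d ∧ b ≠ c ∧ b ≠ d ∧ c ≠ d then f a b c d else 0

lemma distinctSum_congr {f g : V → V → V → V → ℤ}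
    (h : ∀ a b c d, a ≠ b → a ≠ c → a ≠ d → b ≠ c → b ≠ d → c ≠ d → f a b c d = g a b c d) :
    distinctSum f = distinctSum g := by
  unfold distinctSum
  refine sum_congr rfl fun a _ => sum_congr rfl fun b _ => sum_congr rfl fun c _ =>
    sum_congr rfl fun d _ => ?_
  split_ifs with hd
  · exact h a b c d hd.1 hd.2.1 hd.2.2.1 hd.2.2.2.1 hd.2.2.2.2.1 hd.2.2.2.2.2
  · rfl

lemma distinctSum_add (f g : V → V → V → V → ℤ) :
    distinctSum (fun a b c d => f a b c d + g a b c d) = distinctSum f + distinctSum g := by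
  simp only [distinctSum, ← sum_add_distrib]
  refine sum_congr rfl fun a _ => sum_congr rfl fun b _ => sum_congr rfl fun c _ =>
    sum_congr rfl fun d _ => ?_
  split_ifs <;> simp

lemma distinctSum_const_mul (k : ℤ) (f : V → V → V → V → ℤ) :
    distinctSum (fun a b c d => k * f a b c d) = k * distinctSum f := by
  simp only [distinctSum, mul_sum, mul_ite, mul_zero]

lemma distinctSum_swap₁₂ (f : V → V → V → V → ℤ) :
    distinctSum (fun a b c d => f b a c d) = distinctSum f := by
  unfold distinctSum
  rw [sum_comm]
  refine sum_congr rfl fun a _ => sum_congr rfl fun b _ => sum_congr rfl fun c _ =>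
    sum_congr rfl fun d _ => if_congr ?_ rfl rfl
  grind

lemma distinctSum_swap₂₃ (f : V → V → V → V → ℤ) :
    distinctSum (fun a b c d => f a c b d) = distinctSum f := by
  unfold distinctSum
  refine sum_congr rfl fun a _ => ?_
  rw [sum_comm]
  refine sum_congr rfl fun b _ => sum_congr rfl fun c _ =>
    sum_congr rfl fun d _ => if_congr ?_ rfl rfl
  grind

lemma distinctSum_swap₃₄ (f : V → V → V → V → ℤ) :
    distinctSum (fun a b c d => f a b d c) = distinctSum f := by
  unfold distinctSum
  refine sum_congr rfl fun a _ => sum_congr rfl fun b _ => ?_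
  rw [sum_comm]
  refine sum_congr rfl fun c _ =>
    sum_congr rfl fun d _ => if_congr ?_ rfl rfl
  grind

/-- The sum over distinct quadruples of a product of `0/1` weights on the last three entries. -/
lemma distinctSum_star (u : V → V → ℤ) (k : ℤ) (h01 : ∀ x y, u x y = 0 ∨ u x y = 1)
    (hdiag : ∀ x, u x x = 0) (hk : ∀ x, ∑ y, u x y = k) :
    distinctSum (fun a b c d => u a b * u a c * u a d)
      = Fintype.card V * (k * (k - 1) * (k - 2)) := by
  have sq : ∀ x y, u x y * u x y = u x y := fun x y => by rcases h01 x y with e | e <;> simp [e]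
  have inner : ∀ a b c, b ≠ c → u a b * u a c * ∑ d, (if b = d ∨ c = d then 0 else u a d)
      = u a b * u a c * (k - 2) := by
    intro a b c hbc
    have e : ∀ d, (if b = d ∨ c = d then 0 else u a d)
        = u a d - (if b = d then u a d else 0) - (if c = d then u a d else 0) := by
      intro d; split_ifs <;> grind
    simp only [e, sum_sub_distrib, sum_ite_eq, mem_univ, if_true, hk]
    linear_combination (-u a c) * sq a b - u a b * sq a c
  have middle : ∀ a b, u a b * ∑ c, (if b = c then 0 else u a c) = u a b * (k - 1) := by
    intro a b
    have e : ∀ c, (if b = c then 0 else u a c) = u a c - (if b = c then u a c else 0) := by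
      intro c; split_ifs <;> simp
    simp only [e, sum_sub_distrib, sum_ite_eq, mem_univ, if_true, hk]
    linear_combination - sq a b
  have step : ∀ a b c, ∑ d, (if a ≠ b ∧ a ≠ c ∧ a ≠ d ∧ b ≠ c ∧ b ≠ d ∧ c ≠ d
      then u a b * u a c * u a d else 0) = u a b * (if b = c then 0 else u a c) * (k - 2) := by
    intro a b c
    split_ifs with hbc
    · simp [hbc]
    · rw [← inner a b c hbc, mul_sum]
      refine sum_congr rfl fun d _ => ?_
      have := hdiag a
      split_ifs <;> grind
  simp only [distinctSum, step, ← sum_mul, ← mul_sum, middle, hk, sum_const, card_univ,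
    nsmul_eq_mul]
  ring

end DistinctQuadruples

namespace IsDoublyRegularMatrix

variable {V : Type*} [Fintype V] [DecidableEq V] {a : V → V → ℤ} {t : ℤ}

/-- For distinct vertices, the number of paths `x → z → y` of length two avoiding `u` and `v`. -/
def twoPaths (a : V → V → ℤ) (t : ℤ) (x y u v : V) : ℤ :=
  t + 1 - a x y - a x u * a u y - a x v * a v y

lemma distinctSum_four_cycle (h : IsDoublyRegularMatrix a t) :
    distinctSum (fun x y z w => a x y * a y z * a z w * a w x)
      = (4 * t + 3) * (4 * t + 2) * (t * (t + 1)) := by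
  have e1 : distinctSum (fun x y z w => a x y * a y z * a z w * a w x)
      = ∑ x, ∑ y, ∑ z, ∑ w, (a x y * a y z) * (a z w * a w x) := by
    unfold distinctSum
    refine sum_congr rfl fun x _ => sum_congr rfl fun y _ => sum_congr rfl fun z _ =>
      sum_congr rfl fun w _ => ?_
    split_ifs with hd
    · ring
    · have h1 := h.mul_swap x y
      have h2 := h.mul_swap y z
      have := h.diag x
      have := h.diag y
      have := h.diag z
      have := h.diag w
      by_cases x = y <;> by_cases x = z <;> by_cases x = w <;> by_cases y = z <;>
        by_cases y = w <;> by_cases z = w <;> grind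
  have e2 : ∀ x z, ∑ y, ∑ w, (a x y * a y z) * (a z w * a w x)
      = t * (t + 1) - if x = z then t * (t + 1) else 0 := by
    intro x z
    rw [← sum_mul_sum]
    split_ifs with hxz
    · simp [hxz, h.mul_swap]
    · rw [h.two_path hxz, h.two_path (Ne.symm hxz)]
      linear_combination (-(t + 1)) * h.add_swap x z hxz + h.mul_swap x z
  have e3 : ∀ x, ∑ y, ∑ z, ∑ w, (a x y * a y z) * (a z w * a w x)
      = (4 * t + 2) * (t * (t + 1)) := by
    intro x
    rw [sum_comm]
    simp only [e2, sum_sub_distrib, sum_const, card_univ, nsmul_eq_mul, h.card_eq, sum_ite_eq,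
      mem_univ, if_true]
    ring
  rw [e1]
  simp only [e3, sum_const, card_univ, nsmul_eq_mul, h.card_eq]
  ring

lemma distinctSum_one (h : IsDoublyRegularMatrix a t) :
    distinctSum (fun _ _ _ _ : V => 1)
      = (4 * t + 3) * ((4 * t + 2) * (4 * t + 1) * (4 * t)) := by
  have := distinctSum_star (V := V) (fun x y => if x = y then 0 else 1) (4 * t + 2)
    (fun x y => by by_cases hxy : x = y <;> simp [hxy]) (by simp)
    (fun x => by
      have e : ∀ y, (if x = y then (0 : ℤ) else 1) = 1 - if x = y then 1 else 0 := by
        intro y; split_ifs <;> simp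
      simp only [e, sum_sub_distrib, sum_const, card_univ, nsmul_eq_mul, h.card_eq, sum_ite_eq,
        mem_univ, if_true]
      ring)
  rw [h.card_eq] at this
  rw [distinctSum_congr (g := fun a b c d => (if a = b then (0 : ℤ) else 1) *
    (if a = c then (0 : ℤ) else 1) * (if a = d then (0 : ℤ) else 1)), this]
  · ring
  · intro x y z w h1 h2 h3 _ _ _
    simp [h1, h2, h3]

omit [DecidableEq V] in
/-- Symmetrizing a product of numbers of two-paths over the six cyclic orders of a quadruple. -/
lemma twoPaths_symmetrize (h : IsDoublyRegularMatrix a t) {p : V → V → V → V → ℤ}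
    (hp : ∀ x y z w, p x y z w = twoPaths a t x y z w * twoPaths a t y z w x *
      twoPaths a t z w x y * twoPaths a t w x y z)
    {x y z w : V} (hxy : x ≠ y) (hxz : x ≠ z) (hxw : x ≠ w) (hyz : y ≠ z) (hyw : y ≠ w)
    (hzw : z ≠ w) :
    p x y z w + p x y w z + p x z y w + p x z w y + p x w y z + p x w z y
      = (-23 * (t + 1) + 46 * (t + 1) ^ 2 - 28 * (t + 1) ^ 3 + 6 * (t + 1) ^ 4)
        + (11 * (t + 1) - 16 * (t + 1) ^ 2 + 4 * (t + 1) ^ 3) *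
          (a x y * a x z * a x w + a y x * a y z * a y w + a z x * a z y * a z w +
            a w x * a w y * a w z +
            (a y x * a z x * a w x + a x y * a z y * a w y + a x z * a y z * a w z +
            a x w * a y w * a z w))
        + (7 - 8 * (t + 1)) *
          (a x y * a y z * a z w * a w x + a x y * a y w * a w z * a z x +
            a x z * a z y * a y w * a w x + a x z * a z w * a w y * a y x +
            a x w * a w y * a y z * a z x + a x w * a w z * a z y * a y x) := by
  simp only [hp, twoPaths]
  have e1 : a y x = 1 - a x y := by linarith [h.add_swap x y hxy]
  have e2 : a z x = 1 - a x z := by linarith [h.add_swap x z hxz]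
  have e3 : a w x = 1 - a x w := by linarith [h.add_swap x w hxw]
  have e4 : a z y = 1 - a y z := by linarith [h.add_swap y z hyz]
  have e5 : a w y = 1 - a y w := by linarith [h.add_swap y w hyw]
  have e6 : a w z = 1 - a z w := by linarith [h.add_swap z w hzw]
  simp only [e1, e2, e3, e4, e5, e6]
  rcases h.zero_or_one x y with f1 | f1 <;> rcases h.zero_or_one x z with f2 | f2 <;>
    rcases h.zero_or_one x w with f3 | f3 <;> rcases h.zero_or_one y z with f4 | f4 <;>
    rcases h.zero_or_one y w with f5 | f5 <;> rcases h.zero_or_one z w with f6 | f6 <;>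
    simp only [f1, f2, f3, f4, f5, f6] <;> ring

lemma distinctSum_twoPaths (h : IsDoublyRegularMatrix a t) :
    3 * distinctSum (fun x y z w => twoPaths a t x y z w * twoPaths a t y z w x *
      twoPaths a t z w x y * twoPaths a t w x y z)
      = (4 * t + 3) * (2 * t + 1) * t * (4 * (4 * t + 1) *
          (-23 * (t + 1) + 46 * (t + 1) ^ 2 - 28 * (t + 1) ^ 3 + 6 * (t + 1) ^ 4)
        + 8 * (2 * t - 1) * (11 * (t + 1) - 16 * (t + 1) ^ 2 + 4 * (t + 1) ^ 3)
        + 6 * (t + 1) * (7 - 8 * (t + 1))) := by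
  obtain ⟨p, hp⟩ : ∃ p : V → V → V → V → ℤ, p = fun x y z w => twoPaths a t x y z w *
    twoPaths a t y z w x * twoPaths a t z w x y * twoPaths a t w x y z := ⟨_, rfl⟩
  have key := distinctSum_congr fun x y z w hxy hxz hxw hyz hyw hzw =>
    h.twoPaths_symmetrize (p := p) (by simp [hp]) hxy hxz hxw hyz hyw hzw
  have perms : ∀ f : V → V → V → V → ℤ,
      distinctSum (fun x y z w => f x y w z) = distinctSum f ∧
      distinctSum (fun x y z w => f x z y w) = distinctSum f ∧
      distinctSum (fun x y z w => f x z w y) = distinctSum f ∧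
      distinctSum (fun x y z w => f x w y z) = distinctSum f ∧
      distinctSum (fun x y z w => f x w z y) = distinctSum f := by
    intro f
    have s1 := fun f : V → V → V → V → ℤ => distinctSum_swap₃₄ f
    have s2 := fun f : V → V → V → V → ℤ => distinctSum_swap₂₃ f
    have h1 := s1 f
    have h2 := s2 f
    have h3 := (s2 fun x y z w => f x y w z).trans h1
    have h4 := (s1 fun x y z w => f x z y w).trans h2
    have h5 := (s1 fun x y z w => f x z w y).trans h3
    exact ⟨h1, h2, h3, h4, h5⟩
  have firsts : ∀ f : V → V → V → V → ℤ,
      distinctSum (fun x y z w => f y x z w) = distinctSum f ∧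
      distinctSum (fun x y z w => f z x y w) = distinctSum f ∧
      distinctSum (fun x y z w => f w x y z) = distinctSum f := by
    intro f
    have h1 := distinctSum_swap₁₂ f
    have h2 := (distinctSum_swap₂₃ fun x y z w => f y x z w).trans h1
    have h3 := (distinctSum_swap₃₄ fun x y z w => f z x y w).trans h2
    exact ⟨h1, h2, h3⟩
  have out := distinctSum_star a (2 * t + 1) h.zero_or_one h.diag h.sum_out
  have inn := distinctSum_star (fun x y => a y x) (2 * t + 1) (fun x y => h.zero_or_one y x)
    h.diag h.sum_in
  have one : ∀ k : ℤ, distinctSum (fun _ _ _ _ : V => k)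
      = k * ((4 * t + 3) * ((4 * t + 2) * (4 * t + 1) * (4 * t))) := by
    intro k
    rw [← h.distinctSum_one, ← distinctSum_const_mul, mul_one]
  have cyc := h.distinctSum_four_cycle
  obtain ⟨p1, p2, p3, p4, p5⟩ := perms p
  obtain ⟨c1, c2, c3, c4, c5⟩ := perms (fun x y z w => a x y * a y z * a z w * a w x)
  obtain ⟨o1, o2, o3⟩ := firsts (fun x y z w => a x y * a x z * a x w)
  obtain ⟨i1, i2, i3⟩ := firsts (fun x y z w => a y x * a z x * a w x)
  rw [h.card_eq] at out inn
  simp only [distinctSum_add, distinctSum_const_mul, one, p1, p2, p3, p4, p5, c1, c2, c3, c4, c5,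
    o1, o2, o3, i1, i2, i3, out, inn, cyc] at key
  rw [← hp]
  linarith

end IsDoublyRegularMatrix

lemma sum_ite_eq_zero_mul {V : Type*} [Fintype V] [DecidableEq V] (φ : V → ℤ)
    (h : ∀ x, φ x * φ x = φ x) :
    ∑ x, ∑ z, (if x = z then 0 else φ x * φ z) = (∑ x, φ x) * (∑ x, φ x - 1) := by
  have e : ∀ x z, (if x = z then 0 else φ x * φ z)
      = φ x * φ z - if x = z then φ x else 0 := by
    intro x z
    split_ifs with hxz
    · subst hxz; rw [h, sub_self]
    · simp
  simp only [e, sum_sub_distrib, sum_ite_eq, mem_univ, if_true, ← sum_mul_sum]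
  ring

namespace IsDoublyRegularMatrix

variable {V : Type*} [Fintype V] [DecidableEq V] {a : V → V → ℤ} {t : ℤ}

/-- The number of vertices `v` with `x, z → v → y, w`. -/
def middles (a : V → V → ℤ) (x y z w : V) : ℤ := ∑ v, a x v * a v y * (a z v * a v w)

lemma distinctSum_middles (h : IsDoublyRegularMatrix a t) :
    distinctSum (fun x y z w => middles a x y z w * middles a y z w x)
      = (4 * t + 3) * (4 * t + 2) * (t * (t - 1) * ((t + 1) * t)) := by
  have pointwise : ∀ x y z w, (if x ≠ y ∧ x ≠ z ∧ x ≠ w ∧ y ≠ z ∧ y ≠ w ∧ z ≠ w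
      then middles a x y z w * middles a y z w x else 0)
      = ∑ v, ∑ u, (if x = z then 0 else (a u x * a x v) * (a u z * a z v)) *
          (if y = w then 0 else (a v y * a y u) * (a v w * a w u)) := by
    intro x y z w
    by_cases hxz : x = z
    · simp [hxz]
    by_cases hyw : y = w
    · simp [hyw]
    simp only [if_neg hxz, if_neg hyw]
    split_ifs with hd
    · simp only [middles, sum_mul_sum]
      exact sum_congr rfl fun v _ => sum_congr rfl fun u _ => by ring
    · symm
      refine sum_eq_zero fun v _ => sum_eq_zero fun u _ => ?_
      have hxv := h.mul_swap x v
      have hzv := h.mul_swap z v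
      have : x = y ∨ x = w ∨ y = z ∨ z = w := by tauto
      rcases this with rfl | rfl | rfl | rfl <;> grind
  have rearrange : distinctSum (fun x y z w => middles a x y z w * middles a y z w x)
      = ∑ v, ∑ u, (∑ x, ∑ z, if x = z then 0 else (a u x * a x v) * (a u z * a z v)) *
          (∑ y, ∑ w, if y = w then 0 else (a v y * a y u) * (a v w * a w u)) := by
    simp only [distinctSum, pointwise]
    simp only [sum_mul]
    simp only [mul_sum]
    simp_rw [← Fintype.sum_prod_type']
    refine Fintype.sum_equiv
      { toFun := fun p => (p.2.2.2.2.1, p.2.2.2.2.2, p.1, p.2.2.1, p.2.1, p.2.2.2.1)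
        invFun := fun p => (p.2.2.1, p.2.2.2.2.1, p.2.2.2.1, p.2.2.2.2.2, p.1, p.2.1)
        left_inv := fun _ => rfl
        right_inv := fun _ => rfl } _ _ fun _ => rfl
  have count : ∀ v u, (∑ x, ∑ z, if x = z then 0 else (a u x * a x v) * (a u z * a z v)) *
      (∑ y, ∑ w, if y = w then 0 else (a v y * a y u) * (a v w * a w u))
      = t * (t - 1) * ((t + 1) * t) - if v = u then t * (t - 1) * ((t + 1) * t) else 0 := by
    intro v u
    rw [sum_ite_eq_zero_mul (fun x => a u x * a x v), sum_ite_eq_zero_mul (fun y => a v y * a y u)]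
    · split_ifs with hvu
      · simp [hvu, h.mul_swap]
      · rw [h.two_path hvu, h.two_path (Ne.symm hvu)]
        have := h.add_swap v u hvu
        rcases h.zero_or_one v u with e | e
        · rw [show a u v = 1 by linarith, e]; ring
        · rw [show a u v = 0 by linarith, e]; ring
    · intro y; linear_combination a y u * a y u * h.mul_self v y + a v y * h.mul_self y u
    · intro y; linear_combination a y v * a y v * h.mul_self u y + a u y * h.mul_self y v
  rw [rearrange]
  simp only [count, sum_sub_distrib, sum_const, card_univ, nsmul_eq_mul, h.card_eq, sum_ite_eq,
    mem_univ, if_true]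
  ring

/-- The sum of `f x y z w` over distinct in-neighbours `x, z` and distinct out-neighbours `y, w`
of the vertex `v`. -/
def aroundSum (a : V → V → ℤ) (v : V) (f : V → V → V → V → ℤ) : ℤ :=
  ∑ x, ∑ z, ∑ y, ∑ w,
    (if x = z then 0 else a x v * a z v) * (if y = w then 0 else a v y * a v w) * f x y z w

lemma aroundSum_add (v : V) (f g : V → V → V → V → ℤ) :
    aroundSum a v (fun x y z w => f x y z w + g x y z w) = aroundSum a v f + aroundSum a v g := by
  simp only [aroundSum, mul_add, sum_add_distrib]

lemma aroundSum_const_mul (v : V) (k : ℤ) (f : V → V → V → V → ℤ) :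
    aroundSum a v (fun x y z w => k * f x y z w) = k * aroundSum a v f := by
  simp only [aroundSum, mul_sum]
  exact sum_congr rfl fun x _ => sum_congr rfl fun y _ => sum_congr rfl fun z _ =>
    sum_congr rfl fun w _ => by ring

lemma aroundSum_swap_out (v : V) (f : V → V → V → V → ℤ) :
    aroundSum a v (fun x y z w => f x w z y) = aroundSum a v f := by
  unfold aroundSum
  refine sum_congr rfl fun x _ => sum_congr rfl fun z _ => ?_
  rw [sum_comm]
  refine sum_congr rfl fun y _ => sum_congr rfl fun w _ => ?_
  simp only [eq_comm (a := w), mul_comm (a v w)]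

lemma aroundSum_swap (v : V) (f : V → V → V → V → ℤ) :
    aroundSum a v (fun x y z w => f z w x y) = aroundSum a v f := by
  rw [← aroundSum_swap_out v f]
  unfold aroundSum
  rw [sum_comm]
  refine sum_congr rfl fun x _ => sum_congr rfl fun z _ => sum_congr rfl fun y _ =>
    sum_congr rfl fun w _ => ?_
  simp only [eq_comm (a := z), mul_comm (a z v)]

lemma mul_two_path (h : IsDoublyRegularMatrix a t) (v w : V) :
    a v w * ∑ z, a w z * a z v = (t + 1) * a v w := by
  by_cases hvw : w = v
  · simp [hvw, h.diag]
  · rw [h.two_path hvw]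
    linear_combination - h.mul_swap v w

lemma mul_two_path' (h : IsDoublyRegularMatrix a t) (x y : V) :
    a x y * ∑ z, a x z * a z y = t * a x y := by
  by_cases hxy : x = y
  · simp [hxy, h.diag]
  · rw [h.two_path hxy]
    linear_combination - h.mul_self x y

lemma sum_in_pair (h : IsDoublyRegularMatrix a t) (v z : V) :
    ∑ x, (if x = z then 0 else a x v * a z v) = 2 * t * a z v := by
  have e : ∀ x, (if x = z then 0 else a x v * a z v)
      = a x v * a z v - if x = z then a z v else 0 := by
    intro x; split_ifs with hxz
    · rw [hxz, h.mul_self, sub_self]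
    · simp
  simp only [e, sum_sub_distrib, ← sum_mul, h.sum_in, sum_ite_eq', mem_univ, if_true]
  ring

lemma sum_out_pair (h : IsDoublyRegularMatrix a t) (v w : V) :
    ∑ y, (if y = w then 0 else a v y * a v w) = 2 * t * a v w := by
  have e : ∀ x, (if x = w then 0 else a v x * a v w)
      = a v x * a v w - if x = w then a v w else 0 := by
    intro x; split_ifs with hxz
    · rw [hxz, h.mul_self, sub_self]
    · simp
  simp only [e, sum_sub_distrib, ← sum_mul, h.sum_out, sum_ite_eq', mem_univ, if_true]
  ring

lemma sum_in_pair_mul (h : IsDoublyRegularMatrix a t) (v z : V) :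
    ∑ x, (if x = z then 0 else a x v * a z v) * a z x = t * a z v := by
  rw [← h.mul_two_path' z v, mul_sum]
  refine sum_congr rfl fun x _ => ?_
  split_ifs with hxz
  · simp [hxz, h.diag]
  · ring

lemma sum_out_pair_mul (h : IsDoublyRegularMatrix a t) (v w : V) :
    ∑ y, (if y = w then 0 else a v y * a v w) * a y w = t * a v w := by
  rw [← h.mul_two_path' v w, mul_sum]
  refine sum_congr rfl fun x _ => ?_
  split_ifs with hxz
  · simp [hxz, h.diag]
  · ring

lemma aroundSum_one (h : IsDoublyRegularMatrix a t) (v : V) :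
    aroundSum a v (fun _ _ _ _ => 1) = ((2 * t + 1) * (2 * t)) ^ 2 := by
  simp only [aroundSum, mul_one, ← mul_sum, ← sum_mul]
  rw [sum_comm, sum_comm (f := fun y w => if y = w then 0 else a v y * a v w)]
  simp only [h.sum_in_pair, h.sum_out_pair, ← mul_sum, h.sum_in, h.sum_out]
  ring

lemma sum_triangle (h : IsDoublyRegularMatrix a t) (v : V) :
    ∑ z, ∑ w, a z v * a v w * a w z = (2 * t + 1) * (t + 1) := by
  have e : ∀ w, ∑ z, a z v * a v w * a w z = (t + 1) * a v w := by
    intro w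
    rw [← h.mul_two_path, mul_sum]
    exact sum_congr rfl fun z _ => by ring
  rw [sum_comm]
  simp only [e, ← mul_sum, h.sum_out]
  ring

/-- Sums in which the two sides of `v` are linked by a single arc. -/
lemma aroundSum_single (h : IsDoublyRegularMatrix a t) (v : V) (f g : V → V → ℤ) (α β : ℤ)
    (hf : ∀ z, ∑ x, (if x = z then 0 else a x v * a z v) * f x z = α * a z v)
    (hg : ∀ w, ∑ y, (if y = w then 0 else a v y * a v w) * g y w = β * a v w) :
    aroundSum a v (fun x y z w => f x z * g y w * a w z)
      = α * β * ((2 * t + 1) * (t + 1)) := by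
  have e : ∀ z w, ∑ x, ∑ y, (if x = z then 0 else a x v * a z v) *
      (if y = w then 0 else a v y * a v w) * (f x z * g y w * a w z)
      = α * β * (a z v * a v w * a w z) := by
    intro z w
    calc _ = (∑ x, (if x = z then 0 else a x v * a z v) * f x z) *
          (∑ y, (if y = w then 0 else a v y * a v w) * g y w) * a w z := by
          rw [sum_mul_sum, sum_mul]
          refine sum_congr rfl fun x _ => ?_
          rw [sum_mul]
          exact sum_congr rfl fun y _ => by ring
      _ = _ := by rw [hf, hg]; ring
  rw [← h.sum_triangle v]
  simp only [mul_sum, ← e, aroundSum]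
  rw [sum_comm]
  refine sum_congr rfl fun z _ => ?_
  calc _ = ∑ x, ∑ w, ∑ y, _ := sum_congr rfl fun x _ => sum_comm
    _ = _ := sum_comm

lemma sum_in_pair_common (h : IsDoublyRegularMatrix a t) (v w : V) :
    a v w * ∑ x, ∑ z, (if x = z then 0 else a x v * a z v) * (a w x * a w z)
      = (t + 1) * t * a v w := by
  have e := sum_ite_eq_zero_mul (fun z => a w z * a z v)
    (fun y => by linear_combination a y v * a y v * h.mul_self w y + a w y * h.mul_self y v)
  have e' : ∑ x, ∑ z, (if x = z then 0 else a x v * a z v) * (a w x * a w z)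
      = ∑ x, ∑ z, (if x = z then 0 else (a w x * a x v) * (a w z * a z v)) :=
    sum_congr rfl fun x _ => sum_congr rfl fun z _ => by split_ifs <;> ring
  rw [e', e]
  have m := h.mul_two_path v w
  linear_combination (∑ z, a w z * a z v - 1 + (t + 1)) * m

lemma sum_out_pair_common (h : IsDoublyRegularMatrix a t) (v z : V) :
    a z v * ∑ y, ∑ w, (if y = w then 0 else a v y * a v w) * (a y z * a w z)
      = (t + 1) * t * a z v := by
  have e := sum_ite_eq_zero_mul (fun w => a v w * a w z)
    (fun y => by linear_combination a y z * a y z * h.mul_self v y + a v y * h.mul_self y z)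
  have e' : ∑ y, ∑ w, (if y = w then 0 else a v y * a v w) * (a y z * a w z)
      = ∑ x, ∑ z', (if x = z' then 0 else (a v x * a x z) * (a v z' * a z' z)) :=
    sum_congr rfl fun x _ => sum_congr rfl fun z _ => by split_ifs <;> ring
  rw [e', e]
  have m := h.mul_two_path z v
  linear_combination (∑ w, a v w * a w z - 1 + (t + 1)) * m

lemma aroundSum_out_star (h : IsDoublyRegularMatrix a t) (v : V) :
    aroundSum a v (fun x y z w => a y w * a w z * a w x)
      = (2 * t + 1) * t * ((t + 1) * t) := by
  have e : ∀ w, ∑ y, (if y = w then 0 else a v y * a v w) * a y w *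
      ∑ x, ∑ z, (if x = z then 0 else a x v * a z v) * (a w x * a w z)
      = t * ((t + 1) * t * a v w) := by
    intro w
    rw [← sum_mul, h.sum_out_pair_mul, mul_assoc, h.sum_in_pair_common]
  have e' : aroundSum a v (fun x y z w => a y w * a w z * a w x)
      = ∑ w, ∑ y, (if y = w then 0 else a v y * a v w) * a y w *
      ∑ x, ∑ z, (if x = z then 0 else a x v * a z v) * (a w x * a w z) := by
    simp only [aroundSum, mul_sum]
    simp_rw [← Fintype.sum_prod_type']
    exact Fintype.sum_equiv
      { toFun := fun p => (p.2.2.2, p.2.2.1, p.1, p.2.1)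
        invFun := fun p => (p.2.2.1, p.2.2.2, p.2.1, p.1)
        left_inv := fun _ => rfl
        right_inv := fun _ => rfl } _ _ fun _ => by dsimp only [Equiv.coe_fn_mk]; ring
  rw [e']
  simp only [e, ← mul_sum, h.sum_out]
  ring

lemma aroundSum_in_star (h : IsDoublyRegularMatrix a t) (v : V) :
    aroundSum a v (fun x y z w => a z x * a w z * a y z)
      = (2 * t + 1) * t * ((t + 1) * t) := by
  have e : ∀ z, ∑ x, (if x = z then 0 else a x v * a z v) * a z x *
      ∑ y, ∑ w, (if y = w then 0 else a v y * a v w) * (a y z * a w z)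
      = t * ((t + 1) * t * a z v) := by
    intro w
    rw [← sum_mul, h.sum_in_pair_mul, mul_assoc, h.sum_out_pair_common]
  have e' : aroundSum a v (fun x y z w => a z x * a w z * a y z)
      = ∑ z, ∑ x, (if x = z then 0 else a x v * a z v) * a z x *
      ∑ y, ∑ w, (if y = w then 0 else a v y * a v w) * (a y z * a w z) := by
    simp only [aroundSum, mul_sum]
    rw [sum_comm]
    exact sum_congr rfl fun x _ => sum_congr rfl fun y _ => sum_congr rfl fun z _ =>
      sum_congr rfl fun w _ => by ring
  rw [e']
  simp only [e, ← mul_sum, h.sum_in]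
  ring

lemma aroundSum_disjoint (h : IsDoublyRegularMatrix a t) (v : V) :
    aroundSum a v (fun x y z w => a y z * a w x)
      = (2 * t + 1) * (2 * t) * (t + 1) ^ 2 - (2 * t + 1) * ((t + 1) * t) := by
  have split : ∀ x z y w, (if x = z then 0 else a x v * a z v) *
      (if y = w then 0 else a v y * a v w) * (a y z * a w x)
      = (if y = w then 0 else (a v y * (a y z * a z v)) * (a v w * (a w x * a x v)))
        - if x = z then a x v * ((if y = w then 0 else a v y * a v w) * (a y x * a w x)) else 0 := by
    intro x z y w
    by_cases hxz : x = z
    · subst hxz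
      have := h.mul_self x v
      split_ifs <;> grind
    · split_ifs <;> grind
  have first : ∑ x, ∑ z, ∑ y, ∑ w,
      (if y = w then 0 else (a v y * (a y z * a z v)) * (a v w * (a w x * a x v)))
      = (2 * t + 1) * (2 * t) * (t + 1) ^ 2 := by
    have e : ∀ y w, ∑ x, ∑ z,
        (if y = w then 0 else (a v y * (a y z * a z v)) * (a v w * (a w x * a x v)))
        = (if y = w then 0 else a v y * a v w) * (t + 1) ^ 2 := by
      intro y w
      split_ifs with hyw
      · simp
      · rw [sum_comm, ← sum_mul_sum, ← mul_sum, ← mul_sum, h.mul_two_path, h.mul_two_path]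
        ring
    calc _ = ∑ y, ∑ w, ∑ x, ∑ z,
        (if y = w then 0 else (a v y * (a y z * a z v)) * (a v w * (a w x * a x v))) := by
          simp_rw [← Fintype.sum_prod_type']
          exact Fintype.sum_equiv
            { toFun := fun p => (p.2.2.1, p.2.2.2, p.1, p.2.1)
              invFun := fun p => (p.2.2.1, p.2.2.2, p.1, p.2.1)
              left_inv := fun _ => rfl
              right_inv := fun _ => rfl } _ _ fun _ => rfl
      _ = _ := by
          simp only [e, ← sum_mul]
          rw [sum_comm]
          simp only [h.sum_out_pair, ← mul_sum, h.sum_out]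
          ring
  have second : ∀ x, ∑ z, ∑ y, ∑ w,
      (if x = z then a x v * ((if y = w then 0 else a v y * a v w) * (a y x * a w x)) else 0)
      = (t + 1) * t * a x v := by
    intro x
    rw [← h.sum_out_pair_common v x]
    rw [sum_eq_single x (fun z _ hz => by simp [Ne.symm hz]) (by simp)]
    simp only [if_true, mul_sum]
  simp only [aroundSum, split, sum_sub_distrib]
  rw [first]
  simp only [second, ← mul_sum, h.sum_in]
  ring

lemma aroundSum_twoPaths (h : IsDoublyRegularMatrix a t) (v : V) :
    aroundSum a v (fun x y z w => twoPaths a t y z w x * twoPaths a t w x y z)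
      = (t + 1) ^ 2 * ((2 * t + 1) * (2 * t)) ^ 2
        - (t + 1) * (2 * ((2 * t) ^ 2 * ((2 * t + 1) * (t + 1)))
          + 4 * (2 * t * t * ((2 * t + 1) * (t + 1))))
        + ((2 * t + 1) * (2 * t) * (t + 1) ^ 2 - (2 * t + 1) * ((t + 1) * t))
        + 4 * ((2 * t + 1) * t * ((t + 1) * t))
        + 2 * (t * t * ((2 * t + 1) * (t + 1))) := by
  have expand : (fun x y z w => twoPaths a t y z w x * twoPaths a t w x y z)
      = fun x y z w => (t + 1) ^ 2 * 1
        + (-(t + 1)) * (a y z + a w x + a y w * a w z + a w y * a y x + a z x * a w z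
          + a x z * a y x)
        + a y z * a w x + a y w * a w z * a w x + a w y * a y x * a y z
        + a z x * a w z * a y z + a x z * a y x * a w x
        + a z x * a y w * a w z + a x z * a w y * a y x := by
    funext x y z w
    simp only [twoPaths]
    linear_combination (a w z * a y x) * h.mul_swap y w + (a y x * a w z) * h.mul_swap x z
      + a y w * a z x * h.mul_self w z + a x z * a w y * h.mul_self y x
  have one1 : ∀ z, ∑ x, (if x = z then 0 else a x v * a z v) * 1 = 2 * t * a z v := by
    simpa using h.sum_in_pair v
  have one2 : ∀ w, ∑ y, (if y = w then 0 else a v y * a v w) * 1 = 2 * t * a v w := by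
    simpa using h.sum_out_pair v
  have q1 : aroundSum a v (fun x y z w => a w z)
      = 2 * t * (2 * t) * ((2 * t + 1) * (t + 1)) := by
    simpa using h.aroundSum_single v (fun _ _ => 1) (fun _ _ => 1) _ _ one1 one2
  have q2 : aroundSum a v (fun x y z w => a y w * a w z)
      = 2 * t * t * ((2 * t + 1) * (t + 1)) := by
    simpa using h.aroundSum_single v (fun _ _ => 1) (fun y w => a y w) _ _ one1
      (h.sum_out_pair_mul v)
  have q3 : aroundSum a v (fun x y z w => a z x * a w z)
      = t * (2 * t) * ((2 * t + 1) * (t + 1)) := by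
    simpa using h.aroundSum_single v (fun x z => a z x) (fun _ _ => 1) _ _
      (h.sum_in_pair_mul v) one2
  have q4 := h.aroundSum_single v (fun x z => a z x) (fun y w => a y w) _ _
    (h.sum_in_pair_mul v) (h.sum_out_pair_mul v)
  have q1' := (aroundSum_swap_out (a := a) v fun x y z w => a w z).trans q1
  have q1'' := (aroundSum_swap (a := a) v fun x y z w => a y z).trans q1'
  have q2' := (aroundSum_swap (a := a) v fun x y z w => a y w * a w z).trans q2
  have q3' := (aroundSum_swap (a := a) v fun x y z w => a z x * a w z).trans q3
  have q4' := (aroundSum_swap (a := a) v fun x y z w => a z x * a y w * a w z).trans q4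
  have r1 := h.aroundSum_out_star v
  have r2 := h.aroundSum_in_star v
  have r1' := (aroundSum_swap (a := a) v fun x y z w => a y w * a w z * a w x).trans r1
  have r2' := (aroundSum_swap (a := a) v fun x y z w => a z x * a w z * a y z).trans r2
  rw [expand]
  simp only [aroundSum_add, aroundSum_const_mul, h.aroundSum_one, h.aroundSum_disjoint, q1', q1'',
    q2, q2', q3, q3', q4, q4', r1, r1', r2, r2']
  ring

lemma distinctSum_twoPaths_middles (h : IsDoublyRegularMatrix a t) :
    distinctSum (fun x y z w => twoPaths a t y z w x * twoPaths a t w x y z * middles a x y z w)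
      = (4 * t + 3) * ((t + 1) ^ 2 * ((2 * t + 1) * (2 * t)) ^ 2
        - (t + 1) * (2 * ((2 * t) ^ 2 * ((2 * t + 1) * (t + 1)))
          + 4 * (2 * t * t * ((2 * t + 1) * (t + 1))))
        + ((2 * t + 1) * (2 * t) * (t + 1) ^ 2 - (2 * t + 1) * ((t + 1) * t))
        + 4 * ((2 * t + 1) * t * ((t + 1) * t))
        + 2 * (t * t * ((2 * t + 1) * (t + 1)))) := by
  have pointwise : ∀ x y z w, (if x ≠ y ∧ x ≠ z ∧ x ≠ w ∧ y ≠ z ∧ y ≠ w ∧ z ≠ w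
      then twoPaths a t y z w x * twoPaths a t w x y z * middles a x y z w else 0)
      = ∑ v, (if x = z then 0 else a x v * a z v) * (if y = w then 0 else a v y * a v w) *
          (twoPaths a t y z w x * twoPaths a t w x y z) := by
    intro x y z w
    by_cases hxz : x = z
    · simp [hxz]
    by_cases hyw : y = w
    · simp [hyw]
    simp only [if_neg hxz, if_neg hyw]
    split_ifs with hd
    · simp only [middles, mul_sum]
      exact sum_congr rfl fun v _ => by ring
    · symm
      refine sum_eq_zero fun v _ => ?_
      have hxv := h.mul_swap x v
      have hzv := h.mul_swap z v
      have : x = y ∨ x = w ∨ y = z ∨ z = w := by tauto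
      have : a x v * a z v * (a v y * a v w) = 0 := by
        rcases this with rfl | rfl | rfl | rfl <;> grind
      rw [this, zero_mul]
  calc _ = ∑ v, aroundSum a v
        (fun x y z w => twoPaths a t y z w x * twoPaths a t w x y z) := by
        simp only [distinctSum, pointwise, aroundSum]
        simp_rw [← Fintype.sum_prod_type']
        exact Fintype.sum_equiv
          { toFun := fun p => (p.2.2.2.2, p.1, p.2.2.1, p.2.1, p.2.2.2.1)
            invFun := fun p => (p.2.1, p.2.2.2.1, p.2.2.1, p.2.2.2.2, p.1)
            left_inv := fun _ => rfl
            right_inv := fun _ => rfl } _ _ fun _ => rfl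
    _ = _ := by
        simp only [h.aroundSum_twoPaths, sum_const, card_univ, nsmul_eq_mul, h.card_eq]

lemma distinctSum_cycles (h : IsDoublyRegularMatrix a t) :
    distinctSum (fun x y z w =>
      (twoPaths a t x y z w * twoPaths a t z w x y - middles a x y z w) *
      (twoPaths a t y z w x * twoPaths a t w x y z - middles a y z w x))
      = 2 * (4 * t + 3) * (2 * t + 1) * (t ^ 2 * (t ^ 2 - 1)) * (16 * t ^ 2 - 4 * t - 11) := by
  have expand : (fun x y z w =>
      (twoPaths a t x y z w * twoPaths a t z w x y - middles a x y z w) *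
      (twoPaths a t y z w x * twoPaths a t w x y z - middles a y z w x))
      = fun x y z w => twoPaths a t x y z w * twoPaths a t y z w x *
          twoPaths a t z w x y * twoPaths a t w x y z
        + (-1) * (twoPaths a t y z w x * twoPaths a t w x y z * middles a x y z w)
        + (-1) * (twoPaths a t z w x y * twoPaths a t x y z w * middles a y z w x)
        + middles a x y z w * middles a y z w x := by
    funext x y z w; ring
  have rot : ∀ f : V → V → V → V → ℤ,
      distinctSum (fun x y z w => f y z w x) = distinctSum f := by
    intro f
    rw [← distinctSum_swap₃₄ f, ← distinctSum_swap₂₃ (fun x y z w => f x y w z),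
      ← distinctSum_swap₁₂ (fun x y z w => f x z w y)]
  have rotated := rot fun x y z w =>
    twoPaths a t y z w x * twoPaths a t w x y z * middles a x y z w
  rw [expand]
  simp only [distinctSum_add, distinctSum_const_mul, rotated, h.distinctSum_twoPaths_middles,
    h.distinctSum_middles]
  linarith [h.distinctSum_twoPaths]

end IsDoublyRegularMatrix

namespace IsDoublyRegularMatrix

variable {V : Type*} [Fintype V] [DecidableEq V] {a : V → V → ℤ} {t : ℤ}

lemma sum_avoiding (h : IsDoublyRegularMatrix a t) {x y z w : V} (hxy : x ≠ y) (hzw : z ≠ w) :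
    ∑ p, (if p = z ∨ p = w then 0 else a x p * a p y) = twoPaths a t x y z w := by
  have e : ∀ p, (if p = z ∨ p = w then 0 else a x p * a p y) = a x p * a p y
      - (if p = z then a x p * a p y else 0) - (if p = w then a x p * a p y else 0) := by
    intro p; split_ifs <;> grind
  simp only [e, sum_sub_distrib, sum_ite_eq', mem_univ, if_true, h.two_path hxy, twoPaths]

/-- The number of ways to choose distinct midpoints for `x → p → y` and `z → r → w` outside the
quadruple of distinct vertices `x, y, z, w`. -/
lemma sum_midpoints (h : IsDoublyRegularMatrix a t) {x y z w : V}
    (hxy : x ≠ y) (hzw : z ≠ w) :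
    ∑ p, ∑ r, (if p = r then 0 else (if p = z ∨ p = w then 0 else a x p * a p y) *
      (if r = x ∨ r = y then 0 else a z r * a r w))
      = twoPaths a t x y z w * twoPaths a t z w x y - middles a x y z w := by
  have e : ∀ p r, (if p = r then 0 else (if p = z ∨ p = w then 0 else a x p * a p y) *
      (if r = x ∨ r = y then 0 else a z r * a r w))
      = (if p = z ∨ p = w then 0 else a x p * a p y) *
        (if r = x ∨ r = y then 0 else a z r * a r w)
        - if p = r then a x p * a p y * (a z p * a p w) else 0 := by
    intro p r
    by_cases hpr : p = r
    · subst hpr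
      have := h.diag p
      split_ifs <;> grind
    · simp [hpr]
  simp only [e, sum_sub_distrib, ← sum_mul_sum, h.sum_avoiding hxy hzw, h.sum_avoiding hzw hxy,
    sum_ite_eq, mem_univ, if_true, middles]

end IsDoublyRegularMatrix

section ClosedWalks

variable {V : Type*}

/-- Cyclic sequences of length eight, split into their even and odd entries. -/
def octupleEquiv (V : Type*) :
    V × V × V × V × V × V × V × V ≃ (ZMod 8 → V) where
  toFun q := (![q.1, q.2.2.2.2.1, q.2.1, q.2.2.2.2.2.2.1, q.2.2.1, q.2.2.2.2.2.1, q.2.2.2.1,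
    q.2.2.2.2.2.2.2] : Fin 8 → V)
  invFun γ := (γ 0, γ 2, γ 4, γ 6, γ 1, γ 5, γ 3, γ 7)
  left_inv _ := rfl
  right_inv γ := by
    funext k
    change Fin 8 at k
    fin_cases k <;> rfl

lemma octuple_isCycle_iff {r : V → V → Prop} (hr : ∀ i j, r i j → ¬ r j i)
    (x y z w p s q u : V) :
    (Function.Injective (octupleEquiv V (x, y, z, w, p, s, q, u)) ∧
      ∀ k, r (octupleEquiv V (x, y, z, w, p, s, q, u) k)
        (octupleEquiv V (x, y, z, w, p, s, q, u) (k + 1))) ↔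
    (x ≠ y ∧ x ≠ z ∧ x ≠ w ∧ y ≠ z ∧ y ≠ w ∧ z ≠ w) ∧
      (p ≠ s ∧ (p ≠ z ∧ p ≠ w ∧ r x p ∧ r p y) ∧ (s ≠ x ∧ s ≠ y ∧ r z s ∧ r s w)) ∧
      (q ≠ u ∧ (q ≠ w ∧ q ≠ x ∧ r y q ∧ r q z) ∧ (u ≠ y ∧ u ≠ z ∧ r w u ∧ r u x)) := by
  have cyc : (∀ k, r (octupleEquiv V (x, y, z, w, p, s, q, u) k)
      (octupleEquiv V (x, y, z, w, p, s, q, u) (k + 1))) ↔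
      r x p ∧ r p y ∧ r y q ∧ r q z ∧ r z s ∧ r s w ∧ r w u ∧ r u x := by
    constructor
    · intro H
      exact ⟨H 0, H 1, H 2, H 3, H 4, H 5, H 6, H 7⟩
    · rintro ⟨h0, h1, h2, h3, h4, h5, h6, h7⟩ k
      change Fin 8 at k
      fin_cases k
      exacts [h0, h1, h2, h3, h4, h5, h6, h7]
  have inj : Function.Injective (octupleEquiv V (x, y, z, w, p, s, q, u)) ↔
      [x, p, y, q, z, s, w, u].Nodup := by
    exact (List.nodup_ofFn (n := 8)
      (f := (octupleEquiv V (x, y, z, w, p, s, q, u) : Fin 8 → V))).symm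
  rw [cyc, inj]
  simp only [List.nodup_cons, List.mem_cons, List.not_mem_nil, or_false, not_or, not_false_eq_true,
    List.nodup_nil, and_true]
  constructor
  · grind
  · rintro ⟨⟨_, _, _, _, _, _⟩, ⟨_, ⟨_, _, h1, h2⟩, ⟨_, _, h3, h4⟩⟩, ⟨_, ⟨_, _, h5, h6⟩,
      ⟨_, _, h7, h8⟩⟩⟩
    have irr : ∀ i, ¬ r i i := fun i hi => hr i i hi hi
    have ne : ∀ {i j}, r i j → i ≠ j := fun {i j} hij e => irr i (by rw [← e] at hij; exact hij)
    have ne2 : ∀ {i j k}, r i j → r j k → i ≠ k := fun {i j k} hij hjk e => hr i j hij (e ▸ hjk)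
    have := ne h1; have := ne h2; have := ne h3; have := ne h4
    have := ne h5; have := ne h6; have := ne h7; have := ne h8
    have := ne2 h2 h5; have := ne2 h6 h3; have := ne2 h4 h7; have := ne2 h8 h1
    simp_all [eq_comm]

lemma card_cyclicSequences [Fintype V] [DecidableEq V] {r : V → V → Prop} [DecidableRel r]
    (hr : ∀ i j, r i j → ¬ r j i) {t : ℤ}
    (h : IsDoublyRegularMatrix (fun x y => if r x y then 1 else 0) t) :
    (Nat.card {γ : ZMod 8 → V // Function.Injective γ ∧ ∀ k, r (γ k) (γ (k + 1))} : ℤ)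
      = 2 * (4 * t + 3) * (2 * t + 1) * (t ^ 2 * (t ^ 2 - 1)) * (16 * t ^ 2 - 4 * t - 11) := by
  classical
  obtain ⟨a, ha⟩ : ∃ a : V → V → ℤ, a = fun x y => if r x y then 1 else 0 := ⟨_, rfl⟩
  rw [← ha] at h
  obtain ⟨m, hm⟩ : ∃ m : V → V → V → V → V → V → ℤ, m = fun x y z w p s =>
    if p = s then 0 else (if p = z ∨ p = w then 0 else a x p * a p y) *
      (if s = x ∨ s = y then 0 else a z s * a s w) := ⟨_, rfl⟩
  have factor : ∀ e f b c d g : V, (if e = f ∨ e = b then (0 : ℤ) else a c e * a d g)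
      = if e ≠ f ∧ e ≠ b ∧ r c e ∧ r d g then 1 else 0 := by
    intro e f b c d g
    by_cases h1 : e = f <;> by_cases h2 : e = b <;> by_cases h3 : r c e <;>
      by_cases h4 : r d g <;> simp [ha, h1, h2, h3, h4]
  have hm01 : ∀ x y z w p s, m x y z w p s = if p ≠ s ∧ (p ≠ z ∧ p ≠ w ∧ r x p ∧ r p y) ∧
      (s ≠ x ∧ s ≠ y ∧ r z s ∧ r s w) then 1 else 0 := by
    intro x y z w p s
    simp only [hm, factor, ite_zero_mul_ite_zero, one_mul]
    by_cases hps : p = s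
    · simp [hps]
    · simp only [if_false, ne_eq, hps, not_false_eq_true, true_and]
  have split : ∀ x y z w p s q u : V,
      (if Function.Injective (octupleEquiv V (x, y, z, w, p, s, q, u)) ∧
        ∀ k, r (octupleEquiv V (x, y, z, w, p, s, q, u) k)
          (octupleEquiv V (x, y, z, w, p, s, q, u) (k + 1)) then (1 : ℤ) else 0)
      = if x ≠ y ∧ x ≠ z ∧ x ≠ w ∧ y ≠ z ∧ y ≠ w ∧ z ≠ w
        then m x y z w p s * m y z w x q u else 0 := by
    intro x y z w p s q u
    rw [if_congr (octuple_isCycle_iff hr x y z w p s q u) rfl rfl, hm01, hm01, ite_and, ite_and,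
      ite_zero_mul_ite_zero, one_mul, ← ite_and]
  have total : (Nat.card {γ : ZMod 8 → V // Function.Injective γ ∧ ∀ k, r (γ k) (γ (k + 1))} : ℤ)
      = distinctSum fun x y z w =>
        (∑ p, ∑ s, m x y z w p s) * ∑ q, ∑ u, m y z w x q u := by
    rw [Nat.card_eq_fintype_card, Fintype.card_subtype, card_filter, Nat.cast_sum]
    simp only [Nat.cast_ite, Nat.cast_one, Nat.cast_zero]
    rw [← (octupleEquiv V).sum_comp]
    simp only [Fintype.sum_prod_type, split, distinctSum]
    refine sum_congr rfl fun x _ => sum_congr rfl fun y _ => sum_congr rfl fun z _ =>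
      sum_congr rfl fun w _ => ?_
    split_ifs
    · simp only [sum_mul]
      simp only [mul_sum]
    · simp
  rw [total, ← h.distinctSum_cycles]
  refine distinctSum_congr fun x y z w hxy hxz hxw hyz hyw hzw => ?_
  simp only [hm]
  rw [h.sum_midpoints hxy hzw, h.sum_midpoints hyz hxw.symm]

end ClosedWalks

lemma Tournament.isDoublyRegularMatrix {V : Type*} [Fintype V] (T : Tournament V) {t : ℕ}
    (hcard : Fintype.card V = 4 * t + 3) (hDR : T.IsDoublyRegular t) :
    IsDoublyRegularMatrix (fun x y => if T.r x y then 1 else 0) (t : ℤ) where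
  zero_or_one x y := by split_ifs <;> simp
  diag x := by simp [T.irrefl x]
  add_swap x y hxy := by
    have := T.total x y hxy
    by_cases hr : T.r y x <;> simp_all
  card_eq := by rw [hcard]; push_cast; rfl
  common_out x y hxy := by
    rw [← hDR x y hxy, Nat.card_eq_fintype_card, Fintype.card_subtype, card_filter, Nat.cast_sum]
    refine sum_congr rfl fun z _ => ?_
    by_cases h1 : T.r x z <;> by_cases h2 : T.r y z <;> simp [h1, h2]

lemma four_dvd_sq_mul_sq_sub_one (t : ℤ) : (4 : ℤ) ∣ t ^ 2 * (t ^ 2 - 1) := by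
  rcases Int.even_or_odd' t with ⟨s, rfl | rfl⟩
  · exact ⟨s ^ 2 * (4 * s ^ 2 - 1), by ring⟩
  · exact ⟨(2 * s + 1) ^ 2 * (s ^ 2 + s), by ring⟩

end ClosedWalkCounts

theorem eight_cycles_of_doubly_regular
    (t n : ℕ) (hn : n = 4 * t + 3) (T : Tournament (Fin n))
    (hDR : T.IsDoublyRegular t) :
    2048 * (numCycles T.r 8 : ℤ) =
      ((n : ℤ) + 1) * (n : ℤ) * ((n : ℤ) - 1) * ((n : ℤ) - 3) ^ 2 * ((n : ℤ) - 7) *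
        ((n : ℤ) ^ 2 - 7 * (n : ℤ) + 1) := by
  have asymm : ∀ i j, T.r i j → ¬ T.r j i := fun i j hij =>
    (T.total i j fun e => T.irrefl i (by rw [← e] at hij; exact hij)).1 hij
  have count := card_cyclicSequences asymm (T.isDoublyRegularMatrix (by simpa using hn) hDR)
  obtain ⟨m, hm⟩ := four_dvd_sq_mul_sq_sub_one t
  have hn' : (n : ℤ) = 4 * t + 3 := by rw [hn]; push_cast; rfl
  have cycles : (numCycles T.r 8 : ℤ)
      = (4 * t + 3) * (2 * t + 1) * m * (16 * t ^ 2 - 4 * t - 11) := by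
    rw [numCycles, Int.natCast_div, count, hm]
    refine Int.ediv_eq_of_eq_mul_right (by norm_num) ?_
    push_cast
    ring
  rw [cycles, hn']
  linear_combination
    (-512 * (4 * (t : ℤ) + 3) * (2 * t + 1) * (16 * t ^ 2 - 4 * t - 11)) * hm
end

section
/- Any two doubly-regular tournaments of the same order n ≡ 3 mod 4 have the same number of 8-cycles. -/
open Finset

namespace Tournament

variable {V : Type*} [DecidableEq V]

/-! ### The coherent algebra of a doubly-regular tournament -/

/-- The `0/1` adjacency matrix of a tournament. -/
def adj (T : Tournament V) (x y : V) : ℤ := if T.r x y then 1 else 0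

/-- Coordinates of a matrix in the basis `I`, `A`, `Aᵀ`, where `A` is the adjacency matrix of a
tournament. -/
structure Kernel where
  diag : ℤ
  out : ℤ
  inn : ℤ

/-- The matrix with given coordinates in the basis `I`, `A`, `Aᵀ`. -/
def Kernel.eval (c : Kernel) (T : Tournament V) (x y : V) : ℤ :=
  c.diag * (if x = y then 1 else 0) + c.out * T.adj x y + c.inn * T.adj y x

/-- Coordinates of the transpose. -/
def Kernel.transpose (c : Kernel) : Kernel := ⟨c.diag, c.inn, c.out⟩

/-- Coordinates of the entrywise product. -/
def Kernel.schur (c d : Kernel) : Kernel := ⟨c.diag * d.diag, c.out * d.out, c.inn * d.inn⟩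

/-- Coordinates of the matrix product, for a doubly-regular tournament of order `4t+3`. -/
def Kernel.comp (t : ℤ) (c d : Kernel) : Kernel where
  diag := c.diag * d.diag + (2 * t + 1) * (c.out * d.inn + c.inn * d.out)
  out := c.diag * d.out + c.out * d.diag + t * (c.out * d.out + c.out * d.inn + c.inn * d.out)
    + (t + 1) * (c.inn * d.inn)
  inn := c.diag * d.inn + c.inn * d.diag + t * (c.inn * d.inn + c.out * d.inn + c.inn * d.out)
    + (t + 1) * (c.out * d.out)

theorem adj_add_adj (T : Tournament V) (x y : V) :
    T.adj x y + T.adj y x = 1 - if x = y then 1 else 0 := by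
  unfold adj
  by_cases h : x = y
  · subst h; simp [T.irrefl]
  · have := T.total x y h
    by_cases h' : T.r y x <;> simp_all

theorem Kernel.eval_transpose (c : Kernel) (T : Tournament V) (x y : V) :
    c.transpose.eval T x y = c.eval T y x := by
  simp only [eval, transpose, eq_comm (a := x)]
  ring

theorem Kernel.eval_schur (c d : Kernel) (T : Tournament V) (x y : V) :
    (c.schur d).eval T x y = c.eval T x y * d.eval T x y := by
  unfold eval schur adj
  by_cases h : x = y
  · subst h; simp [T.irrefl]
  · have := T.total x y h
    by_cases h' : T.r y x <;> simp_all

theorem Kernel.eval_self (c : Kernel) (T : Tournament V) (x : V) : c.eval T x x = c.diag := by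
  simp [eval, adj, T.irrefl]

omit [DecidableEq V] in
theorem IsDoublyRegular.sum_adj_mul_adj_of_ne [Fintype V] {T : Tournament V} {t : ℕ}
    (h : T.IsDoublyRegular t) {x y : V} (hxy : x ≠ y) :
    ∑ z, T.adj x z * T.adj y z = t := by
  rw [← h x y hxy, Nat.card_eq_fintype_card, Fintype.card_subtype, Finset.card_filter]
  push_cast
  refine Finset.sum_congr rfl fun z _ => ?_
  unfold adj
  by_cases h1 : T.r x z <;> by_cases h2 : T.r y z <;> simp [h1, h2]

omit [DecidableEq V] in
theorem adj_mul_self (T : Tournament V) (x y : V) : T.adj x y * T.adj x y = T.adj x y := by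
  unfold adj; split <;> simp

theorem two_mul_sum_adj [Fintype V] (T : Tournament V) :
    2 * ∑ z, ∑ x, T.adj x z = (Fintype.card V : ℤ) * (Fintype.card V - 1) := by
  have h : ∑ z, ∑ x, (T.adj x z + T.adj z x)
      = ∑ z : V, ∑ x : V, (1 - if x = z then (1 : ℤ) else 0) :=
    Finset.sum_congr rfl fun z _ => Finset.sum_congr rfl fun x _ => T.adj_add_adj x z
  simp only [Finset.sum_add_distrib] at h
  rw [Finset.sum_comm (f := fun z x => T.adj z x)] at h
  simp [Finset.sum_sub_distrib] at h
  linarith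

theorem IsDoublyRegular.sum_adj_left [Fintype V] {T : Tournament V} {t : ℕ}
    (h : T.IsDoublyRegular t) (hV : Fintype.card V = 4 * t + 3) (z : V) :
    ∑ x, T.adj x z = 2 * t + 1 := by
  have hc : (Fintype.card V : ℤ) = 4 * t + 3 := by exact_mod_cast hV
  have h1 : ∑ z, ∑ x, T.adj x z = (4 * t + 3) * (2 * t + 1) := by
    have := T.two_mul_sum_adj
    rw [hc] at this
    linarith
  have h2 : ∑ z, (∑ x, T.adj x z) ^ 2 = ∑ z, ∑ x, T.adj x z
      + t * ((Fintype.card V : ℤ) * (Fintype.card V - 1)) := by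
    have key : ∀ x y, ∑ z, T.adj x z * T.adj y z
        = (if x = y then ∑ z, T.adj x z else 0) + t * (1 - if x = y then 1 else 0) := by
      intro x y
      by_cases hxy : x = y
      · subst hxy; simp [adj_mul_self]
      · simp [hxy, h.sum_adj_mul_adj_of_ne hxy]
    calc ∑ z, (∑ x, T.adj x z) ^ 2 = ∑ z, ∑ x, ∑ y, T.adj x z * T.adj y z := by
          simp only [sq, Finset.sum_mul_sum]
      _ = ∑ x, ∑ y, ∑ z, T.adj x z * T.adj y z := by
          rw [Finset.sum_comm]
          exact Finset.sum_congr rfl fun x _ => Finset.sum_comm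
      _ = _ := by
          simp only [key, Finset.sum_add_distrib, ← Finset.mul_sum, Finset.sum_sub_distrib]
          simp
          rw [Finset.sum_comm]
          ring
  have h3 : ∑ z, (∑ x, T.adj x z - (2 * t + 1)) ^ 2 = 0 := by
    simp only [sub_sq, Finset.sum_add_distrib, Finset.sum_sub_distrib, h2, ← Finset.mul_sum,
      ← Finset.sum_mul]
    simp only [sum_const, card_univ, nsmul_eq_mul, hc, h1]
    ring
  have h4 := (Finset.sum_eq_zero_iff_of_nonneg fun z _ => sq_nonneg _).1 h3 z (mem_univ z)
  exact sub_eq_zero.1 (pow_eq_zero_iff two_ne_zero |>.1 h4)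

theorem IsDoublyRegular.sum_adj_right [Fintype V] {T : Tournament V} {t : ℕ}
    (h : T.IsDoublyRegular t) (hV : Fintype.card V = 4 * t + 3) (x : V) :
    ∑ z, T.adj x z = 2 * t + 1 := by
  have hc : (Fintype.card V : ℤ) = 4 * t + 3 := by exact_mod_cast hV
  have h1 := Finset.sum_congr rfl fun z (_ : z ∈ univ) => T.adj_add_adj x z
  simp only [Finset.sum_add_distrib, h.sum_adj_left hV, Finset.sum_sub_distrib] at h1
  simp [hc] at h1
  linarith

theorem IsDoublyRegular.sum_adj_mul_adj [Fintype V] {T : Tournament V} {t : ℕ}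
    (h : T.IsDoublyRegular t) (hV : Fintype.card V = 4 * t + 3) (x y : V) :
    ∑ z, T.adj x z * T.adj y z = t + (t + 1) * if x = y then 1 else 0 := by
  by_cases hxy : x = y
  · subst hxy
    simp only [adj_mul_self, h.sum_adj_right hV, if_true]
    ring
  · simp [hxy, h.sum_adj_mul_adj_of_ne hxy]

theorem IsDoublyRegular.sum_adj_mul_adj_path [Fintype V] {T : Tournament V} {t : ℕ}
    (h : T.IsDoublyRegular t) (hV : Fintype.card V = 4 * t + 3) (x y : V) :
    ∑ z, T.adj x z * T.adj z y = t * T.adj x y + (t + 1) * T.adj y x := by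
  have h1 : ∀ z, T.adj x z * T.adj z y
      = T.adj x z - (if y = z then T.adj x z else 0) - T.adj x z * T.adj y z := by
    intro z
    rw [eq_sub_of_add_eq' (T.adj_add_adj y z)]
    split <;> ring
  simp only [h1, Finset.sum_sub_distrib, h.sum_adj_right hV, h.sum_adj_mul_adj hV,
    Finset.sum_ite_eq, mem_univ, if_true]
  linear_combination (-(t : ℤ) - 1) * T.adj_add_adj x y

theorem IsDoublyRegular.sum_adj_mul_adj_in [Fintype V] {T : Tournament V} {t : ℕ}
    (h : T.IsDoublyRegular t) (hV : Fintype.card V = 4 * t + 3) (x y : V) :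
    ∑ z, T.adj z x * T.adj z y = t + (t + 1) * if x = y then 1 else 0 := by
  have h1 : ∀ z, T.adj z x * T.adj z y
      = T.adj z y - (if x = z then T.adj z y else 0) - T.adj x z * T.adj z y := by
    intro z
    rw [eq_sub_of_add_eq' (T.adj_add_adj x z)]
    split <;> ring
  simp only [h1, Finset.sum_sub_distrib, h.sum_adj_left hV, h.sum_adj_mul_adj_path hV,
    Finset.sum_ite_eq, mem_univ, if_true]
  linear_combination (-(t : ℤ) - 1) * T.adj_add_adj x y

theorem IsDoublyRegular.sum_eval_mul_eval [Fintype V] {T : Tournament V} {t : ℕ}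
    (h : T.IsDoublyRegular t) (hV : Fintype.card V = 4 * t + 3) (c d : Kernel) (x y : V) :
    ∑ z, c.eval T x z * d.eval T z y = (c.comp t d).eval T x y := by
  have h1 : ∀ z, c.eval T x z * d.eval T z y
      = (if x = z then c.diag * d.eval T z y else 0)
        + (if z = y then d.diag * (c.out * T.adj x z + c.inn * T.adj z x) else 0)
        + c.out * d.out * (T.adj x z * T.adj z y) + c.out * d.inn * (T.adj x z * T.adj y z)
        + c.inn * d.out * (T.adj z x * T.adj z y) + c.inn * d.inn * (T.adj y z * T.adj z x) := by
    intro z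
    simp only [Kernel.eval]
    split <;> split <;> ring
  simp only [h1, Finset.sum_add_distrib, ← Finset.mul_sum, h.sum_adj_mul_adj_path hV,
    h.sum_adj_mul_adj hV, h.sum_adj_mul_adj_in hV, Finset.sum_ite_eq, Finset.sum_ite_eq',
    mem_univ, if_true]
  simp only [Kernel.eval, Kernel.comp]
  linear_combination (-(t : ℤ) * (c.out * d.inn + c.inn * d.out)) * T.adj_add_adj x y

/-! ### Elimination of vertices of degree at most two -/

variable {ι : Type*}

/-- The product of the kernels of a labelled edge list, at a given assignment of the vertices. -/
def weight (T : Tournament V) (W : List ((ι × ι) × Kernel)) (x : ι → V) : ℤ :=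
  (W.map fun e => e.2.eval T (x e.1.1) (x e.1.2)).prod

theorem weight_cons (T : Tournament V) (e : (ι × ι) × Kernel) (W : List ((ι × ι) × Kernel))
    (x : ι → V) : T.weight (e :: W) x = e.2.eval T (x e.1.1) (x e.1.2) * T.weight W x := by
  simp [weight]

/-- An edge list is determined if all its weighted homomorphism sums agree on any two
doubly-regular tournaments with the same parameter. -/
def Determined (V : Type*) [DecidableEq V] [Fintype V] [DecidableEq ι] [Fintype ι] (t : ℕ)
    (E : List (ι × ι)) : Prop :=
  ∀ W : List ((ι × ι) × Kernel), W.map Prod.fst = E →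
    ∀ T₁ T₂ : Tournament V, T₁.IsDoublyRegular t → T₂.IsDoublyRegular t →
      ∑ x, T₁.weight W x = ∑ x, T₂.weight W x

/-- The edges which are not incident to `v`. -/
def deleteVertex [DecidableEq ι] (v : ι) (E : List (ι × ι)) : List (ι × ι) :=
  E.filter fun e => e.1 ≠ v ∧ e.2 ≠ v

omit [DecidableEq V] in
theorem sum_update [DecidableEq ι] [Fintype ι] [Fintype V] (v : ι) (g : (ι → V) → ℤ) :
    ∑ x, ∑ y, g (Function.update x v y) = Fintype.card V * ∑ x, g x := by
  have h : Function.Involutive fun p : (ι → V) × V => (Function.update p.1 v p.2, p.1 v) := by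
    rintro ⟨x, y⟩
    simp
  have h' := Equiv.sum_comp h.toPerm fun p : (ι → V) × V => g p.1
  simp only [Function.Involutive.coe_toPerm] at h'
  rw [← Fintype.sum_prod_type', h', Fintype.sum_prod_type]
  simp [Finset.mul_sum]

theorem exists_weight_eq [DecidableEq ι] {v u w : ι} (W : List ((ι × ι) × Kernel))
    (hout : ∀ e ∈ W, e.1.1 = v → e.1.2 = u ∨ e.1.2 = w)
    (hinn : ∀ e ∈ W, e.1.2 = v → e.1.1 = u ∨ e.1.1 = w) :
    ∃ c d : Kernel, ∀ (T : Tournament V) (x : ι → V),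
      T.weight W x = c.eval T (x u) (x v) * d.eval T (x v) (x w)
        * T.weight (W.filter fun e => e.1.1 ≠ v ∧ e.1.2 ≠ v) x := by
  induction W with
  | nil =>
    refine ⟨⟨1, 1, 1⟩, ⟨1, 1, 1⟩, fun T x => ?_⟩
    have h1 := T.adj_add_adj (x u) (x v)
    have h2 := T.adj_add_adj (x v) (x w)
    have h3 : (⟨1, 1, 1⟩ : Kernel).eval T (x u) (x v) = 1 := by
      simp only [Kernel.eval]; linarith
    have h4 : (⟨1, 1, 1⟩ : Kernel).eval T (x v) (x w) = 1 := by
      simp only [Kernel.eval]; linarith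
    simp [weight, h3, h4]
  | cons e W ih =>
    obtain ⟨c, d, hcd⟩ := ih (fun e he => hout e (List.mem_cons_of_mem _ he))
      (fun e he => hinn e (List.mem_cons_of_mem _ he))
    have ho := hout e List.mem_cons_self
    have hi := hinn e List.mem_cons_self
    obtain ⟨⟨i, j⟩, b⟩ := e
    simp only at ho hi
    by_cases h1 : i = v
    · subst h1
      rcases ho rfl with rfl | rfl
      · refine ⟨b.transpose.schur c, d, fun T x => ?_⟩
        simp [weight_cons, hcd, Kernel.eval_schur, Kernel.eval_transpose]
        ring
      · refine ⟨c, b.schur d, fun T x => ?_⟩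
        simp [weight_cons, hcd, Kernel.eval_schur]
        ring
    · by_cases h2 : j = v
      · subst h2
        rcases hi rfl with rfl | rfl
        · refine ⟨b.schur c, d, fun T x => ?_⟩
          simp [weight_cons, hcd, Kernel.eval_schur]
          ring
        · refine ⟨c, b.transpose.schur d, fun T x => ?_⟩
          simp [weight_cons, hcd, Kernel.eval_schur, Kernel.eval_transpose]
          ring
      · refine ⟨c, d, fun T x => ?_⟩
        simp [weight_cons, hcd, h1, h2]
        ring

theorem weight_update [DecidableEq ι] (T : Tournament V) (v : ι) (W : List ((ι × ι) × Kernel))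
    (hW : ∀ e ∈ W, e.1.1 ≠ v ∧ e.1.2 ≠ v) (x : ι → V) (y : V) :
    T.weight W (Function.update x v y) = T.weight W x := by
  unfold weight
  congr 1
  refine List.map_congr_left fun e he => ?_
  rw [Function.update_of_ne (hW e he).1, Function.update_of_ne (hW e he).2]

section Elimination

variable [DecidableEq ι] [Fintype ι] [Fintype V] {t : ℕ}

theorem determined_nil : Determined V t ([] : List (ι × ι)) := by
  intro W hW T₁ T₂ _ _
  obtain rfl := List.map_eq_nil_iff.1 hW
  simp [weight]

theorem Determined.cons_loop {E : List (ι × ι)} (hE : Determined V t E) (u : ι) :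
    Determined V t ((u, u) :: E) := by
  intro W hW T₁ T₂ h₁ h₂
  obtain ⟨e, W, rfl, he, rfl⟩ := List.map_eq_cons_iff.1 hW
  simp only [weight_cons, he, Kernel.eval_self, ← Finset.mul_sum]
  rw [hE W rfl T₁ T₂ h₁ h₂]

theorem Determined.of_deleteVertex (hV : Fintype.card V = 4 * t + 3) {E : List (ι × ι)}
    {v u w : ι} (hu : u ≠ v) (hw : w ≠ v)
    (hout : ∀ e ∈ E, e.1 = v → e.2 = u ∨ e.2 = w)
    (hinn : ∀ e ∈ E, e.2 = v → e.1 = u ∨ e.1 = w)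
    (hE : Determined V t ((u, w) :: deleteVertex v E)) : Determined V t E := by
  rintro W rfl T₁ T₂ h₁ h₂
  obtain ⟨c, d, hcd⟩ := exists_weight_eq (V := V) (v := v) (u := u) (w := w) W
    (fun e he => hout e.1 (List.mem_map_of_mem he)) (fun e he => hinn e.1 (List.mem_map_of_mem he))
  set W' := W.filter fun e => e.1.1 ≠ v ∧ e.1.2 ≠ v with hW'
  have hmem : ∀ e ∈ W', e.1.1 ≠ v ∧ e.1.2 ≠ v := by
    intro e he
    simpa using (List.mem_filter.1 he).2
  have key : ∀ T : Tournament V, T.IsDoublyRegular t →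
      Fintype.card V * ∑ x, T.weight W x = ∑ x, T.weight (((u, w), c.comp t d) :: W') x := by
    intro T hT
    rw [← sum_update v]
    refine Finset.sum_congr rfl fun x _ => ?_
    simp only [hcd, weight_cons, ← hT.sum_eval_mul_eval hV, weight_update T v W' hmem,
      Function.update_self, Function.update_of_ne hu, Function.update_of_ne hw, Finset.sum_mul]
  have hpos : (Fintype.card V : ℤ) ≠ 0 := by rw [hV]; positivity
  refine mul_left_cancel₀ hpos ?_
  rw [key T₁ h₁, key T₂ h₂]
  refine hE _ ?_ T₁ T₂ h₁ h₂
  simp [hW', deleteVertex, List.filter_map, Function.comp_def]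

/-- Eliminate the listed vertices one after the other, skipping those of degree above two, and
test whether this removes all edges. -/
def eliminates : List ι → List (ι × ι) → Bool
  | [], E => E.isEmpty
  | v :: vs, E =>
    match ((E.filter fun e => e.1 = v).map Prod.snd
        ++ (E.filter fun e => e.2 = v).map Prod.fst).dedup with
    | [] => eliminates vs E
    | [u] => u ≠ v && eliminates vs (deleteVertex v E)
    | [u, w] => u ≠ v && w ≠ v && eliminates vs ((u, w) :: deleteVertex v E)
    | _ => eliminates vs E

theorem determined_of_eliminates (hV : Fintype.card V = 4 * t + 3) (vs : List ι)
    (E : List (ι × ι)) (h : eliminates vs E = true) : Determined V t E := by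
  induction vs generalizing E with
  | nil =>
    simp only [eliminates, List.isEmpty_iff] at h
    exact h ▸ determined_nil
  | cons v vs ih =>
    have hmem : ∀ z, z ∈ ((E.filter fun e => e.1 = v).map Prod.snd
        ++ (E.filter fun e => e.2 = v).map Prod.fst).dedup ↔ (v, z) ∈ E ∨ (z, v) ∈ E := by
      intro z
      simp
    have hout : ∀ e ∈ E, e.1 = v → (v, e.2) ∈ E := by rintro ⟨i, j⟩ he rfl; exact he
    have hinn : ∀ e ∈ E, e.2 = v → (e.1, v) ∈ E := by rintro ⟨i, j⟩ he rfl; exact he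
    unfold eliminates at h
    split at h
    · exact ih E h
    · rename_i u hN
      rw [hN] at hmem
      simp only [Bool.and_eq_true, decide_eq_true_eq] at h
      refine .of_deleteVertex hV h.1 h.1 (fun e he hv => ?_) (fun e he hv => ?_)
        ((ih _ h.2).cons_loop u)
      · simpa using (hmem e.2).2 (.inl (hout e he hv))
      · simpa using (hmem e.1).2 (.inr (hinn e he hv))
    · rename_i u w hN
      rw [hN] at hmem
      simp only [Bool.and_eq_true, decide_eq_true_eq] at h
      refine .of_deleteVertex hV h.1.1 h.1.2 (fun e he hv => ?_) (fun e he hv => ?_) (ih _ h.2)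
      · simpa using (hmem e.2).2 (.inl (hout e he hv))
      · simpa using (hmem e.1).2 (.inr (hinn e he hv))
    · exact ih E h

/-! ### Inclusion–exclusion over identifications of vertices -/

/-- The indicator that `x` maps every pair of `E` to an arc. -/
def arcs (T : Tournament V) (E : List (ι × ι)) (x : ι → V) : ℤ :=
  (E.map fun e => T.adj (x e.1) (x e.2)).prod

/-- The indicator that `x` separates every pair of `L`. -/
def separated (L : List (ι × ι)) (x : ι → V) : ℤ :=
  (L.map fun e => 1 - if x e.1 = x e.2 then 1 else 0).prod

/-- Apply `f` to both ends of every pair. -/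
def mapEnds (f : ι → ι) (E : List (ι × ι)) : List (ι × ι) := E.map (Prod.map f f)

/-- The map which sends `u` to `v` and fixes all other vertices. -/
def merge (u v : ι) (i : ι) : ι := if i = u then v else i

/-- Test whether an edge list contains a loop or a pair of opposite edges. -/
def hasLoopOrTwoCycle (E : List (ι × ι)) : Bool :=
  E.any fun e => e.1 = e.2 || E.contains e.swap

/-- Expand the separation conditions one after the other, by identifying the two ends of the pair
or dropping the condition, and test that every resulting edge list either does not embed in a
tournament or can be eliminated by the vertex list `vs`. -/
def expands (vs : List ι) : ℕ → List (ι × ι) → List (ι × ι) → Bool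
  | 0, _, _ => false
  | _ + 1, E, [] => eliminates vs E
  | k + 1, E, (u, v) :: L => u = v || (expands vs k E L &&
      (hasLoopOrTwoCycle (mapEnds (merge u v) E) ||
        expands vs k (mapEnds (merge u v) E) (mapEnds (merge u v) L)))

theorem Determined.sum_arcs_eq {E : List (ι × ι)} (hE : Determined V t E) {T₁ T₂ : Tournament V}
    (h₁ : T₁.IsDoublyRegular t) (h₂ : T₂.IsDoublyRegular t) :
    ∑ x, T₁.arcs E x = ∑ x, T₂.arcs E x := by
  have h : ∀ T : Tournament V, ∀ x, T.arcs E x = T.weight (E.map fun e => (e, ⟨0, 1, 0⟩)) x := by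
    intro T x
    simp [arcs, weight, Kernel.eval, Function.comp_def]
  simp only [h]
  exact hE _ (by simp [Function.comp_def]) T₁ T₂ h₁ h₂

omit [DecidableEq V] [Fintype ι] [Fintype V] in
theorem arcs_eq_zero (T : Tournament V) {E : List (ι × ι)}
    (hE : hasLoopOrTwoCycle E = true) (x : ι → V) :
    T.arcs E x = 0 := by
  simp only [hasLoopOrTwoCycle, List.any_eq_true, Bool.or_eq_true, decide_eq_true_eq, List.contains_iff_mem] at hE
  obtain ⟨⟨i, j⟩, he, hij⟩ := hE
  have hzero : ∀ e ∈ E, ¬ T.r (x e.1) (x e.2) → T.arcs E x = 0 := fun e he hr =>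
    List.prod_eq_zero (List.mem_map.2 ⟨e, he, by simp [adj, hr]⟩)
  by_cases h : x i = x j
  · exact hzero _ he (by simp [h, T.irrefl])
  · rcases hij with hij | hs
    · exact absurd (congrArg x hij) h
    · by_cases hr : T.r (x i) (x j)
      · exact hzero _ hs ((T.total _ _ h).1 hr)
      · exact hzero _ he hr

theorem card_mul_sum_ite (u v : ι) (huv : u ≠ v) (g : (ι → V) → ℤ) :
    Fintype.card V * ∑ x : ι → V, (if x u = x v then g x else 0)
      = ∑ x : ι → V, g (x ∘ merge u v) := by
  rw [← sum_update u]
  refine Finset.sum_congr rfl fun x _ => ?_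
  have : x ∘ merge u v = Function.update x u (x v) := by
    ext i
    simp only [Function.comp, merge, Function.update_apply]
    split <;> rfl
  simp [Function.update_of_ne huv.symm, this]

theorem sum_arcs_mul_separated_eq (hV : Fintype.card V = 4 * t + 3) {T₁ T₂ : Tournament V}
    (h₁ : T₁.IsDoublyRegular t) (h₂ : T₂.IsDoublyRegular t) (vs : List ι) (k : ℕ)
    (E L : List (ι × ι)) (h : expands vs k E L = true) :
    ∑ x, T₁.arcs E x * separated L x = ∑ x, T₂.arcs E x * separated L x := by
  induction k generalizing E L with
  | zero => simp [expands] at h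
  | succ k ih =>
    match L with
    | [] => simpa [separated] using (determined_of_eliminates hV vs E h).sum_arcs_eq h₁ h₂
    | (u, v) :: L =>
      simp only [expands, Bool.or_eq_true, Bool.and_eq_true, decide_eq_true_eq] at h
      rcases h with rfl | ⟨hdrop, hmerge⟩
      · simp [separated]
      by_cases huv : u = v
      · simp [separated, huv]
      have hsplit : ∀ T : Tournament V, ∑ x, T.arcs E x * separated ((u, v) :: L) x
          = ∑ x, T.arcs E x * separated L x
            - ∑ x : ι → V, if x u = x v then T.arcs E x * separated L x else 0 := by
        intro T
        rw [← Finset.sum_sub_distrib]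
        refine Finset.sum_congr rfl fun x _ => ?_
        simp only [separated, List.map_cons, List.prod_cons]
        split <;> ring
      have hcomp : ∀ T : Tournament V,
          Fintype.card V * (∑ x : ι → V, if x u = x v then T.arcs E x * separated L x else 0)
            = ∑ x, T.arcs (mapEnds (merge u v) E) x * separated (mapEnds (merge u v) L) x := by
        intro T
        rw [card_mul_sum_ite u v huv]
        simp [arcs, separated, mapEnds, Function.comp_def]
      have hpos : (Fintype.card V : ℤ) ≠ 0 := by rw [hV]; positivity
      rw [hsplit, hsplit, ih E L hdrop]
      congr 1
      refine mul_left_cancel₀ hpos ?_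
      rw [hcomp, hcomp]
      rcases hmerge with hmerge | hmerge
      · simp [arcs_eq_zero _ hmerge]
      · exact ih _ _ hmerge

end Elimination

/-! ### Directed cycles of length eight -/

/-- The arcs of the directed cycle on `Fin 8`. -/
def cycleArcs : List (Fin 8 × Fin 8) := (List.finRange 8).map fun i => (i, i + 1)

/-- The pairs of distinct elements of `Fin 8`, each in at least one of the two orders, sorted by
cyclic distance: the pairs at distance one or two cannot be identified on the directed cycle, and
are best expanded first. -/
def vertexPairs : List (Fin 8 × Fin 8) :=
  [1, 2, 3, 4].flatMap fun d => (List.finRange 8).map fun i => (i, i + d)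

theorem ne_of_mem_vertexPairs : ∀ e ∈ vertexPairs, e.1 ≠ e.2 := by decide

theorem mem_vertexPairs_or_swap_mem :
    ∀ i j : Fin 8, i ≠ j → (i, j) ∈ vertexPairs ∨ (j, i) ∈ vertexPairs := by decide

theorem expands_cycleArcs :
    expands ((List.replicate 2 (List.finRange 8)).flatten) 33 cycleArcs vertexPairs = true := by
  decide +kernel

theorem card_injective_cycles_eq_sum [Fintype V] (T : Tournament V) :
    (Nat.card {γ : ZMod 8 → V // Function.Injective γ ∧ ∀ k, T.r (γ k) (γ (k + 1))} : ℤ)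
      = ∑ x, T.arcs cycleArcs x * separated vertexPairs x := by
  classical
  change (Nat.card {γ : Fin 8 → V // Function.Injective γ ∧ ∀ k, T.r (γ k) (γ (k + 1))} : ℤ) = _
  rw [Nat.card_eq_fintype_card, Fintype.card_subtype, Finset.card_filter]
  push_cast
  refine Finset.sum_congr rfl fun x _ => ?_
  have harcs : T.arcs cycleArcs x = if ∀ k, T.r (x k) (x (k + 1)) then 1 else 0 := by
    split_ifs with h
    · simp [arcs, cycleArcs, Function.comp_def, adj, h]
    · push Not at h
      obtain ⟨k, hk⟩ := h
      refine List.prod_eq_zero (List.mem_map.2 ⟨(k, k + 1), ?_, by simp [adj, hk]⟩)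
      simp [cycleArcs]
  have hsep : separated vertexPairs x = if Function.Injective x then 1 else 0 := by
    split_ifs with h
    · refine List.prod_eq_one fun a ha => ?_
      obtain ⟨e, he, rfl⟩ := List.mem_map.1 ha
      simp [h.eq_iff, ne_of_mem_vertexPairs e he]
    · rw [Function.not_injective_iff] at h
      obtain ⟨i, j, hij, hne⟩ := h
      rcases mem_vertexPairs_or_swap_mem i j hne with he | he
      · exact List.prod_eq_zero (List.mem_map.2 ⟨(i, j), he, by simp [hij]⟩)
      · exact List.prod_eq_zero (List.mem_map.2 ⟨(j, i), he, by simp [hij]⟩)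
  rw [harcs, hsep]
  by_cases ha : Function.Injective x <;> by_cases hb : ∀ k, T.r (x k) (x (k + 1)) <;>
    simp [ha, hb]

end Tournament

theorem eight_cycles_doubly_regular_independent_of_choice
    (t n : ℕ) (hn : n = 4 * t + 3)
    (T₁ T₂ : Tournament (Fin n))
    (h₁ : T₁.IsDoublyRegular t) (h₂ : T₂.IsDoublyRegular t) :
    numCycles T₁.r 8 = numCycles T₂.r 8 := by
  have hV : Fintype.card (Fin n) = 4 * t + 3 := by simpa using hn
  have h :
      (Nat.card {γ : ZMod 8 → Fin n // Function.Injective γ ∧ ∀ k, T₁.r (γ k) (γ (k + 1))} : ℤ)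
      = Nat.card {γ : ZMod 8 → Fin n // Function.Injective γ ∧ ∀ k, T₂.r (γ k) (γ (k + 1))} := by
    rw [T₁.card_injective_cycles_eq_sum, T₂.card_injective_cycles_eq_sum]
    exact Tournament.sum_arcs_mul_separated_eq hV h₁ h₂ _ _ _ _ Tournament.expands_cycleArcs
  unfold numCycles
  rw [Int.ofNat_inj.1 h]
end

section
/- For each odd n ≥ 1, the number of 8-cycles in the regular locally transitive tournament RLT_n satisfies c_8(RLT_n) = (n+1)·n·(n−1)·(n−3)·(n−5)·(n−7)·(83n²−575n+510)/161280. -/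
/-- The dominance relation of the regular locally transitive tournament `RLT_n`
on `ZMod n` (for odd `n`): there is an arc `(i,j)` iff
`(j - i) mod n ∈ {1, …, (n-1)/2}`. -/
def rltAdj (n : ℕ) (i j : ZMod n) : Prop :=
  (j - i).val ∈ Finset.Icc 1 ((n - 1) / 2)

/-- The arcs of the transitive tournament on `ℕ` switched by the binary digits of `e`. -/
def SwitchedAdj (e u v : ℕ) : Prop :=
  u < v ↔ e.testBit u = e.testBit v

/-- The out-neighbours of `u < 8` among `{0, …, 7}` for `SwitchedAdj e`, as a bit mask. The raw
operations on `ℕ` here and below keep kernel evaluation fast. -/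
def outMask (e u : ℕ) : ℕ :=
  Nat.xor (Nat.xor e (Nat.sub (Nat.pow 2 (Nat.succ u)) 1))
    (Nat.mul 255 (Nat.sub 1 (Nat.land 1 (Nat.shiftRight e u))))

theorem testBit_outMask (e : ℕ) {u v : ℕ} (hv : v < 8) :
    (outMask e u).testBit v = true ↔ SwitchedAdj e u v := by
  have h : outMask e u =
      (e ^^^ (2 ^ (u + 1) - 1)) ^^^ (255 * (1 - (1 &&& (e >>> u)))) := rfl
  have hb : 1 &&& (e >>> u) = (e.testBit u).toNat := by
    rw [Nat.one_and_eq_mod_two, Nat.shiftRight_eq_div_pow, Nat.toNat_testBit]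
  have h255 : Nat.testBit 255 v = true := by
    rw [show 255 = 2 ^ 8 - 1 from rfl, Nat.testBit_two_pow_sub_one]
    simpa using hv
  rw [h, hb, Nat.testBit_xor, Nat.testBit_xor, Nat.testBit_two_pow_sub_one, SwitchedAdj]
  by_cases huv : u < v
  · have h' : ¬ v < u + 1 := by omega
    cases e.testBit u <;> cases e.testBit v <;> simp [huv, h', h255]
  · have h' : v < u + 1 := by omega
    cases e.testBit u <;> cases e.testBit v <;> simp [huv, h', h255]

/-- `x` if the `v`-th binary digit of `c` is `1`, and `0` otherwise. -/
def selectBit (c v x : ℕ) : ℕ :=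
  Nat.rec 0 (fun _ _ => x) (Nat.land c (Nat.pow 2 v))

theorem selectBit_eq (c v x : ℕ) : selectBit c v x = if c.testBit v then x else 0 := by
  have h : Nat.land c (Nat.pow 2 v) = (c.testBit v).toNat * 2 ^ v := Nat.and_two_pow c v
  rw [selectBit, h]
  cases c.testBit v
  · simp
  · obtain ⟨k, hk⟩ := Nat.exists_eq_succ_of_ne_zero (pow_ne_zero v (two_ne_zero (α := ℕ)))
    simp [hk]

/-- The number of paths for `SwitchedAdj e` that start at `u`, visit `r` further distinct vertices
from the bit mask `s`, and end at an in-neighbour of `0`. -/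
def pathCount (e : ℕ) : ℕ → ℕ → ℕ → ℕ
  | 0, _, u => Nat.land 1 (outMask e u)
  | r + 1, s, u =>
    (fun c p =>
      Nat.add (selectBit c 0 (p 0)) (Nat.add (selectBit c 1 (p 1))
        (Nat.add (selectBit c 2 (p 2)) (Nat.add (selectBit c 3 (p 3))
          (Nat.add (selectBit c 4 (p 4)) (Nat.add (selectBit c 5 (p 5))
            (Nat.add (selectBit c 6 (p 6)) (selectBit c 7 (p 7)))))))))
      (Nat.land s (outMask e u)) (fun v => pathCount e r (Nat.xor s (Nat.pow 2 v)) v)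

open Classical in
theorem pathCount_zero (e s u : ℕ) :
    pathCount e 0 s u = if SwitchedAdj e u 0 then 1 else 0 := by
  have h : pathCount e 0 s u = 1 &&& (outMask e u >>> 0) := rfl
  rw [h, Nat.one_and_eq_mod_two, Nat.shiftRight_eq_div_pow, ← Nat.toNat_testBit]
  simp only [← testBit_outMask e (show 0 < 8 by norm_num)]
  cases (outMask e u).testBit 0 <;> simp

open Classical in
theorem pathCount_succ (e r s u : ℕ) :
    pathCount e (r + 1) s u = ∑ v : Fin 8,
      if s.testBit v ∧ SwitchedAdj e u v then pathCount e r (s ^^^ 2 ^ (v : ℕ)) v else 0 := by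
  have h (v : Fin 8) :
      (if s.testBit v ∧ SwitchedAdj e u v then pathCount e r (s ^^^ 2 ^ (v : ℕ)) v else 0) =
        selectBit (Nat.land s (outMask e u)) v (pathCount e r (Nat.xor s (Nat.pow 2 v)) v) := by
    rw [selectBit_eq, show Nat.land s (outMask e u) = s &&& outMask e u from rfl,
      Nat.testBit_and]
    simp only [Bool.and_eq_true, testBit_outMask e v.isLt]
    rfl
  simp only [h, Fin.sum_univ_eight, add_assoc]
  rfl

/-- The sequences counted by `pathCount`. -/
def IsPath (e : ℕ) : (r : ℕ) → ℕ → ℕ → (Fin r → Fin 8) → Prop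
  | 0, _, u, _ => SwitchedAdj e u 0
  | r + 1, s, u, f => (s.testBit (f 0) ∧ SwitchedAdj e u (f 0)) ∧
      IsPath e r (s ^^^ 2 ^ (f 0 : ℕ)) (f 0) (Fin.tail f)

open Classical in
theorem sum_isPath (e r s u : ℕ) :
    ∑ f : Fin r → Fin 8, (if IsPath e r s u f then 1 else 0) = pathCount e r s u := by
  induction r generalizing s u with
  | zero =>
    simp only [pathCount_zero, IsPath, Finset.univ_unique, Finset.sum_singleton]
    congr
  | succ r ih =>
    rw [pathCount_succ, ← (Fin.consEquiv fun _ : Fin (r + 1) => Fin 8).sum_comp,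
      Fintype.sum_prod_type]
    refine Finset.sum_congr rfl fun v _ => ?_
    rw [← ih]
    by_cases h : s.testBit v ∧ SwitchedAdj e u v
    · simp [IsPath, Fin.consEquiv, h]
    · simp [IsPath, Fin.consEquiv, h]

theorem isPath_iff (e r s u : ℕ) (hu : u < 8) (f : Fin r → Fin 8) :
    IsPath e r s u f ↔ (Function.Injective f ∧ ∀ i, s.testBit (f i)) ∧
      ∀ i : Fin (r + 1), SwitchedAdj e (Fin.cons (α := fun _ => Fin 8) ⟨u, hu⟩ f i : Fin 8)
        (Fin.snoc (α := fun _ => Fin 8) f 0 i : Fin 8) := by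
  induction r generalizing s u with
  | zero =>
    simp only [IsPath, Function.injective_of_subsingleton, IsEmpty.forall_iff, true_and]
    refine ⟨fun h i => ?_, fun h => h 0⟩
    rw [Fin.fin_one_eq_zero i]
    exact h
  | succ r ih =>
    obtain ⟨v, f, rfl⟩ : ∃ v g, f = Fin.cons (α := fun _ => Fin 8) v g :=
      ⟨f 0, Fin.tail f, (Fin.cons_self_tail f).symm⟩
    have hbits : (∀ i, s.testBit (Fin.cons (α := fun _ => Fin 8) v f i : Fin 8) = true) ↔
        s.testBit v = true ∧ ∀ i, s.testBit (f i) = true := Fin.forall_fin_succ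
    rw [IsPath, Fin.tail_cons, Fin.cons_zero, ih _ _ v.isLt, Fin.cons_injective_iff, hbits,
      Fin.forall_fin_succ (n := r + 1)]
    have h (w : Fin 8) : (s ^^^ 2 ^ (v : ℕ)).testBit w = true ∧ s.testBit v = true ↔
        (s.testBit w = true ∧ w ≠ v) ∧ s.testBit v = true := by
      rw [Nat.testBit_xor, Nat.testBit_two_pow]
      by_cases hw : v = w
      · subst hw; simp
      · have : (v : ℕ) ≠ w := fun h => hw (Fin.ext h)
        simp [this, Ne.symm hw]
    have h' (hs : s.testBit v = true) (w : Fin 8) :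
        (s ^^^ 2 ^ (v : ℕ)).testBit w = true ↔ (s.testBit w = true ∧ w ≠ v) := by
      simpa [hs] using h w
    simp only [Fin.cons_succ, Fin.cons_zero, ← Fin.cons_snoc_eq_snoc_cons, Fin.eta, Set.mem_range,
      not_exists]
    constructor
    · rintro ⟨⟨hs, hv⟩, ⟨hf, hb⟩, hc⟩
      exact ⟨⟨⟨fun i => ((h' hs _).1 (hb i)).2, hf⟩, hs, fun i => ((h' hs _).1 (hb i)).1⟩, hv, hc⟩
    · rintro ⟨⟨⟨hn, hf⟩, hs, hb⟩, hv, hc⟩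
      exact ⟨⟨hs, hv⟩, ⟨hf, fun i => (h' hs _).2 ⟨hb i, hn i⟩⟩, hc⟩

/-- A permutation `σ` of eight ranks traces out a directed cycle for `SwitchedAdj e`. -/
def IsCycle (e : ℕ) (σ : Equiv.Perm (Fin 8)) : Prop :=
  ∀ k, SwitchedAdj e (σ k) (σ (k + 1))

theorem card_isCycle_zero (e : ℕ) :
    Nat.card {σ : Equiv.Perm (Fin 8) // σ 0 = 0 ∧ IsCycle e σ} = pathCount e 7 254 0 := by
  classical
  rw [← sum_isPath, Finset.sum_boole, Nat.cast_id, ← Fintype.card_subtype,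
    ← Nat.card_eq_fintype_card]
  have h254 (w : Fin 8) : Nat.testBit 254 w = true ↔ w ≠ 0 := by
    revert w; decide
  have key (f : Fin 7 → Fin 8) : IsPath e 7 254 0 f ↔
      Function.Injective (Fin.cons (α := fun _ => Fin 8) 0 f) ∧
      ∀ k, SwitchedAdj e (Fin.cons (α := fun _ => Fin 8) 0 f k : Fin 8)
        (Fin.cons (α := fun _ => Fin 8) 0 f (k + 1) : Fin 8) := by
    have hs (k : Fin 8) : (Fin.cons (α := fun _ => Fin 8) 0 f (k + 1) : Fin 8) =
        Fin.snoc (α := fun _ => Fin 8) f 0 k := by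
      fin_cases k <;> rfl
    rw [isPath_iff e 7 254 0 (by norm_num), Fin.cons_injective_iff]
    simp only [h254, hs, Set.mem_range, not_exists]
    rw [and_comm (a := Function.Injective f)]
    rfl
  refine Nat.card_congr (Equiv.ofBijective (fun σ => ⟨Fin.tail σ.1, ?_⟩) ⟨?_, ?_⟩)
  · have h : Fin.cons (α := fun _ => Fin 8) 0 (Fin.tail σ.1) = σ.1 := by
      conv_rhs => rw [← Fin.cons_self_tail σ.1, σ.2.1]
    rw [key, h]
    exact ⟨σ.1.injective, σ.2.2⟩
  · intro σ τ h
    have h' : Fin.tail σ.1 = Fin.tail τ.1 := congrArg Subtype.val h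
    apply Subtype.ext
    apply DFunLike.coe_injective
    rw [← Fin.cons_self_tail σ.1, ← Fin.cons_self_tail τ.1, h', σ.2.1, τ.2.1]
  · rintro ⟨f, hf⟩
    obtain ⟨hi, hc⟩ := (key f).1 hf
    exact ⟨⟨Equiv.ofBijective _ (Finite.injective_iff_bijective.1 hi), rfl, hc⟩, rfl⟩

theorem card_isCycle (e : ℕ) :
    Nat.card {σ : Equiv.Perm (Fin 8) // IsCycle e σ} = 8 * pathCount e 7 254 0 := by
  rw [← card_isCycle_zero]
  have hrot (i : Fin 8) : Nat.card {σ : Equiv.Perm (Fin 8) // σ i = 0 ∧ IsCycle e σ} =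
      Nat.card {σ : Equiv.Perm (Fin 8) // σ 0 = 0 ∧ IsCycle e σ} := by
    refine Nat.card_congr ((Equiv.mulRight (Equiv.addRight i)).subtypeEquiv fun σ => ?_)
    simp only [IsCycle, Equiv.coe_mulRight, Equiv.Perm.mul_apply, Equiv.coe_addRight, zero_add]
    refine and_congr_right fun _ => ((Equiv.addRight i).forall_congr fun k => ?_).symm
    simp [add_right_comm]
  have hsum : Nat.card {σ : Equiv.Perm (Fin 8) // IsCycle e σ} =
      ∑ i : Fin 8, Nat.card {σ : Equiv.Perm (Fin 8) // σ i = 0 ∧ IsCycle e σ} := by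
    rw [← Nat.card_sigma]
    refine Nat.card_congr
      { toFun := fun σ => ⟨σ.1.symm 0, σ.1, by simp, σ.2⟩
        invFun := fun x => ⟨x.2.1, x.2.2.2⟩
        left_inv := fun _ => rfl
        right_inv := ?_ }
    rintro ⟨i, σ, hi, hσ⟩
    obtain rfl : i = σ.symm 0 := by simp [← hi]
    rfl
  simp [hsum, hrot]

/-- The number of ascents `01` among the binary digits of `e` in positions `0, …, i`. -/
def ascents (e : ℕ) : ℕ → ℕ
  | 0 => 0
  | i + 1 => ascents e i + bif !e.testBit i && e.testBit (i + 1) then 1 else 0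

theorem ascents_le (e i : ℕ) : ascents e i ≤ i := by
  induction i with
  | zero => rfl
  | succ i ih =>
    rw [ascents]
    cases !e.testBit i && e.testBit (i + 1) <;> simp <;> omega

/-- There are `(m + parityShift e).choose 8` increasing sequences of length eight in
`{0, …, 2 * m}` whose parities are the digits of `e`. -/
def parityShift (e : ℕ) : ℕ :=
  ascents e 7 + bif e.testBit 7 then 0 else 1

/-- The parities of `g`, as binary digits. -/
def parityCode {n : ℕ} (g : Fin 8 → Fin n) : ℕ :=
  Nat.ofBits fun i => decide ((g i : ℕ) % 2 = 1)

theorem testBit_parityCode {n : ℕ} (g : Fin 8 → Fin n) (i : Fin 8) :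
    (parityCode g).testBit i = decide ((g i : ℕ) % 2 = 1) := by
  simp [parityCode, Nat.testBit_ofBits_lt]

theorem parityCode_lt {n : ℕ} (g : Fin 8 → Fin n) : parityCode g < 256 :=
  Nat.ofBits_lt_two_pow _

theorem parityCode_eq_iff {n : ℕ} (g : Fin 8 → Fin n) {e : ℕ} (he : e < 256) :
    parityCode g = e ↔ ∀ i : Fin 8, (g i : ℕ) % 2 = (e.testBit i).toNat := by
  have hb (i : Fin 8) : ((g i : ℕ) % 2 = (e.testBit i).toNat) ↔
      (parityCode g).testBit i = e.testBit i := by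
    rw [testBit_parityCode]
    rcases Nat.mod_two_eq_zero_or_one (g i) with h | h <;> cases e.testBit i <;> simp [h]
  simp only [hb]
  refine ⟨fun h i => by rw [h], fun h => Nat.eq_of_testBit_eq fun i => ?_⟩
  by_cases hi : i < 8
  · exact h ⟨i, hi⟩
  · have hp : 256 ≤ 2 ^ i := Nat.pow_le_pow_right (n := 2) (by norm_num) (not_lt.1 hi)
    rw [Nat.testBit_lt_two_pow ((parityCode_lt g).trans_le hp),
      Nat.testBit_lt_two_pow (he.trans_le hp)]

theorem Fin.val_le_apply_of_strictMono {n : ℕ} {f : Fin n → ℕ} (hf : StrictMono f) (i : Fin n) :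
    (i : ℕ) ≤ f i := by
  obtain ⟨i, hi⟩ := i
  induction i with
  | zero => exact Nat.zero_le _
  | succ i ih =>
    have h : f ⟨i, by omega⟩ < f ⟨i + 1, hi⟩ := hf (by simp)
    have := ih (by omega)
    simp only at this ⊢
    omega

theorem card_parityCode_eq (m : ℕ) {e : ℕ} (he : e < 256) :
    Nat.card {g : Fin 8 ↪o Fin (2 * m + 1) // parityCode g = e} =
      (m + parityShift e).choose 8 := by
  have hcard (N : ℕ) : Nat.card (Fin 8 ↪o Fin N) = N.choose 8 := by
    rw [Nat.card_congr Set.powersetCard.ofFinEmbEquiv, Set.powersetCard.card, Nat.card_fin]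
  rw [← hcard]
  have hasc (i : ℕ) : ascents e (i + 1) + (e.testBit i).toNat * (e.testBit (i + 1)).toNat =
      ascents e i + (e.testBit (i + 1)).toNat := by
    rw [ascents]
    cases e.testBit i <;> cases e.testBit (i + 1) <;> simp
  have hshift : parityShift e + (e.testBit 7).toNat = ascents e 7 + 1 := by
    rw [parityShift]
    cases e.testBit 7 <;> simp
  have hto (g : {g : Fin 8 ↪o Fin (2 * m + 1) // parityCode g = e}) :
      StrictMono fun i : Fin 8 => (g.1 i : ℕ) / 2 + ascents e i := by
    refine Fin.strictMono_iff_lt_succ.2 fun i => ?_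
    have h1 := (parityCode_eq_iff g.1 he).1 g.2 i.castSucc
    have h2 := (parityCode_eq_iff g.1 he).1 g.2 i.succ
    have h3 : (g.1 i.castSucc : ℕ) < g.1 i.succ := g.1.strictMono i.castSucc_lt_succ
    have h4 := hasc i
    simp only [Fin.val_castSucc, Fin.val_succ] at h1 h2 ⊢
    cases h5 : e.testBit i <;> cases h6 : e.testBit (i + 1) <;>
      simp only [h5, h6, Bool.toNat_false, Bool.toNat_true] at h1 h2 h4 <;> omega
  have hinv (g : Fin 8 ↪o Fin (m + parityShift e)) :
      StrictMono fun i : Fin 8 => 2 * ((g i : ℕ) - ascents e i) + (e.testBit i).toNat := by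
    refine Fin.strictMono_iff_lt_succ.2 fun i => ?_
    have h1 := Fin.val_le_apply_of_strictMono (f := fun i => (g i : ℕ)) g.strictMono i.castSucc
    have h2 := Fin.val_le_apply_of_strictMono (f := fun i => (g i : ℕ)) g.strictMono i.succ
    have h3 : (g i.castSucc : ℕ) < g i.succ := g.strictMono i.castSucc_lt_succ
    have h4 := hasc i
    have h5 := ascents_le e i
    have h6 := ascents_le e (i + 1)
    simp only [Fin.val_castSucc, Fin.val_succ] at h1 h2 ⊢
    cases h5 : e.testBit i <;> cases h6 : e.testBit (i + 1) <;>
      simp only [h5, h6, Bool.toNat_false, Bool.toNat_true] at h4 ⊢ <;> omega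
  refine Nat.card_congr
    { toFun := fun g => OrderEmbedding.ofStrictMono
        (fun i => ⟨(g.1 i : ℕ) / 2 + ascents e i, ?_⟩) (hto g)
      invFun := fun g => ⟨OrderEmbedding.ofStrictMono
        (fun i => ⟨2 * ((g i : ℕ) - ascents e i) + (e.testBit i).toNat, ?_⟩) (hinv g), ?_⟩
      left_inv := ?_
      right_inv := ?_ }
  · have h1 := (hto g).monotone (Fin.le_last i)
    have h2 := (parityCode_eq_iff g.1 he).1 g.2 (Fin.last 7)
    have h3 := (g.1 (Fin.last 7)).isLt
    simp only [Fin.val_last] at h1 h2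
    omega
  · have h1 := (hinv g).monotone (Fin.le_last i)
    have h2 := (g (Fin.last 7)).isLt
    have h3 := Fin.val_le_apply_of_strictMono (f := fun i => (g i : ℕ)) g.strictMono (Fin.last 7)
    have h4 := ascents_le e 7
    simp only [Fin.val_last] at h1 h3
    cases h5 : e.testBit 7 <;>
      simp only [h5, Bool.toNat_false, Bool.toNat_true] at h1 hshift <;> omega
  · rw [parityCode_eq_iff _ he]
    intro i
    change (2 * ((g i : ℕ) - ascents e i) + (e.testBit i).toNat) % 2 = (e.testBit i).toNat
    have := (e.testBit i).toNat_lt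
    omega
  · intro g
    ext i
    have h := (parityCode_eq_iff g.1 he).1 g.2 i
    change 2 * ((g.1 i : ℕ) / 2 + ascents e i - ascents e i) + (e.testBit i).toNat = g.1 i
    omega
  · intro g
    ext i
    have h1 := Fin.val_le_apply_of_strictMono (f := fun i => (g i : ℕ)) g.strictMono i
    have h2 := ascents_le e i
    change (2 * ((g i : ℕ) - ascents e i) + (e.testBit i).toNat) / 2 + ascents e i = g i
    have := (e.testBit i).toNat_lt
    omega

theorem rltAdj_iff (m : ℕ) (i j : ZMod (2 * m + 1)) :
    rltAdj (2 * m + 1) i j ↔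
      ((2 * i).val < (2 * j).val ↔ (2 * i).val % 2 = (2 * j).val % 2) := by
  have hd : ((2 * m + 1 : ℕ) : ℤ) ∣ 2 * ((j - i).val : ℤ) - ((2 * j).val - (2 * i).val) := by
    rw [← ZMod.intCast_zmod_eq_zero_iff_dvd]
    push_cast
    simp only [ZMod.natCast_val, ZMod.cast_id', id_eq]
    ring
  obtain ⟨t, ht⟩ := hd
  have h1 := ZMod.val_lt (j - i)
  have h2 := ZMod.val_lt (2 * i)
  have h3 := ZMod.val_lt (2 * j)
  rw [rltAdj, Finset.mem_Icc]
  generalize (j - i).val = d at *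
  generalize (2 * i).val = p at *
  generalize (2 * j).val = q at *
  have ht0 : -1 < t := by
    by_contra! h
    have : ((2 * m + 1 : ℕ) : ℤ) * t ≤ ((2 * m + 1 : ℕ) : ℤ) * (-1) := by gcongr
    omega
  have ht3 : t < 3 := by
    by_contra! h
    have : ((2 * m + 1 : ℕ) : ℤ) * 3 ≤ ((2 * m + 1 : ℕ) : ℤ) * t := by gcongr
    omega
  interval_cases t <;> omega

/-- Every injective sequence is an increasing one composed with a permutation. -/
theorem bijective_orderEmbedding_perm (k n : ℕ) : Function.Bijective
    fun x : (Fin k ↪o Fin n) × Equiv.Perm (Fin k) =>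
      (⟨x.1 ∘ x.2, x.1.injective.comp x.2.injective⟩ :
        {f : Fin k → Fin n // Function.Injective f}) := by
  constructor
  · rintro ⟨g, σ⟩ ⟨g', σ'⟩ h
    have h' : g ∘ σ = g' ∘ σ' := congrArg Subtype.val h
    obtain rfl : g = g' := by
      rw [← OrderEmbedding.range_inj, ← σ.surjective.range_comp g, h', σ'.surjective.range_comp]
    obtain rfl : σ = σ' := Equiv.ext fun i => g.injective (congrFun h' i)
    rfl
  · rintro ⟨f, hf⟩
    have hmono : StrictMono (f ∘ Tuple.sort f) :=
      (Tuple.monotone_sort f).strictMono_of_injective (hf.comp (Tuple.sort f).injective)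
    refine ⟨(OrderEmbedding.ofStrictMono _ hmono, (Tuple.sort f)⁻¹), Subtype.ext (funext ?_)⟩
    simp

theorem card_cyclic_sequences (m : ℕ) :
    Nat.card {γ : ZMod 8 → ZMod (2 * m + 1) //
      Function.Injective γ ∧ ∀ k, rltAdj (2 * m + 1) (γ k) (γ (k + 1))} =
      ∑ e ∈ Finset.range 256, (m + parityShift e).choose 8 * (8 * pathCount e 7 254 0) := by
  classical
  have h2 : IsUnit (2 : ZMod (2 * m + 1)) := by
    have := (ZMod.isUnit_iff_coprime 2 (2 * m + 1)).2 (by simp)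
    exact_mod_cast this
  let φ : ZMod (2 * m + 1) ≃ Fin (2 * m + 1) := h2.unit.mulLeft
  have e₁ : {γ : ZMod 8 → ZMod (2 * m + 1) //
      Function.Injective γ ∧ ∀ k, rltAdj (2 * m + 1) (γ k) (γ (k + 1))} ≃
      {f : {f : Fin 8 → Fin (2 * m + 1) // Function.Injective f} //
        ∀ k, ((f.1 k : ℕ) < f.1 (k + 1) ↔ (f.1 k : ℕ) % 2 = (f.1 (k + 1) : ℕ) % 2)} :=
    ((Equiv.arrowCongr (Equiv.refl (ZMod 8)) φ).subtypeEquiv fun γ =>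
      and_congr (φ.comp_injective γ).symm (forall_congr' fun k => rltAdj_iff m _ _)).trans
      (Equiv.subtypeSubtypeEquivSubtypeInter
        (fun f : Fin 8 → Fin (2 * m + 1) => Function.Injective f)
        fun f => ∀ k, ((f k : ℕ) < f (k + 1) ↔ (f k : ℕ) % 2 = (f (k + 1) : ℕ) % 2)).symm
  have hcode (g : Fin 8 ↪o Fin (2 * m + 1)) (a b : Fin 8) :
      ((g a : ℕ) < g b ↔ (g a : ℕ) % 2 = (g b : ℕ) % 2) ↔ SwitchedAdj (parityCode g) a b := by
    rw [SwitchedAdj, testBit_parityCode, testBit_parityCode, Fin.val_fin_lt, g.lt_iff_lt,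
      Fin.val_fin_lt, decide_eq_decide]
    refine iff_congr Iff.rfl ?_
    omega
  have e₂ : {f : {f : Fin 8 → Fin (2 * m + 1) // Function.Injective f} //
        ∀ k, ((f.1 k : ℕ) < f.1 (k + 1) ↔ (f.1 k : ℕ) % 2 = (f.1 (k + 1) : ℕ) % 2)} ≃
      {x : (Fin 8 ↪o Fin (2 * m + 1)) × Equiv.Perm (Fin 8) // IsCycle (parityCode x.1) x.2} :=
    ((Equiv.ofBijective _ (bijective_orderEmbedding_perm 8 (2 * m + 1))).subtypeEquiv
      fun x => forall_congr' fun k => (hcode x.1 _ _).symm).symm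
  have e₃ : {x : (Fin 8 ↪o Fin (2 * m + 1)) × Equiv.Perm (Fin 8) //
        IsCycle (parityCode x.1) x.2} ≃
      Σ g : Fin 8 ↪o Fin (2 * m + 1), {σ : Equiv.Perm (Fin 8) // IsCycle (parityCode g) σ} :=
    Equiv.subtypeProdEquivSigmaSubtype fun (g : Fin 8 ↪o Fin (2 * m + 1)) σ =>
      IsCycle (parityCode g) σ
  have : Fintype (Fin 8 ↪o Fin (2 * m + 1)) := Fintype.ofFinite _
  rw [Nat.card_congr (e₁.trans (e₂.trans e₃)), Nat.card_sigma]
  simp only [card_isCycle]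
  rw [← Finset.sum_fiberwise_of_maps_to (s := Finset.univ) (t := Finset.range 256)
    (g := fun g : Fin 8 ↪o Fin (2 * m + 1) => parityCode g)
    fun g _ => Finset.mem_range.2 (parityCode_lt g)]
  refine Finset.sum_congr rfl fun e he => ?_
  rw [← card_parityCode_eq m (Finset.mem_range.1 he), Nat.card_eq_fintype_card,
    Fintype.card_subtype]
  refine Finset.sum_const_nat fun g hg => ?_
  rw [(Finset.mem_filter.1 hg).2]

theorem parityShift_lt (e : ℕ) (he : e ∈ Finset.range 256) : parityShift e ∈ Finset.range 5 := by
  revert e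
  decide +kernel

theorem sum_pathCount (k : ℕ) (hk : k ∈ Finset.range 5) :
    ∑ e ∈ Finset.range 256 with parityShift e = k, pathCount e 7 254 0 =
      [0, 213, 1983, 2675, 441].getD k 0 := by
  revert k
  decide +kernel

theorem cast_factorial_mul_choose_eight (N : ℕ) :
    (40320 * N.choose 8 : ℤ) = N * (N - 1) * (N - 2) * (N - 3) * (N - 4) * (N - 5) * (N - 6) *
      (N - 7) := by
  have h := descPochhammer_eval_eq_descFactorial ℤ N 8
  rw [Nat.descFactorial_eq_factorial_mul_choose, descPochhammer_eval_eq_prod_range] at h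
  simp only [Finset.prod_range_succ, Finset.prod_range_zero, Nat.factorial] at h
  push_cast at h
  linarith

theorem eight_cycles_of_RLT (n : ℕ) (hodd : Odd n) (hn : 1 ≤ n) :
    161280 * (numCycles (rltAdj n) 8 : ℤ) =
      ((n : ℤ) + 1) * (n : ℤ) * ((n : ℤ) - 1) * ((n : ℤ) - 3) * ((n : ℤ) - 5) *
        ((n : ℤ) - 7) * (83 * (n : ℤ) ^ 2 - 575 * (n : ℤ) + 510) := by
  obtain ⟨m, rfl⟩ := hodd
  have hcycles : numCycles (rltAdj (2 * m + 1)) 8 =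
      ∑ k ∈ Finset.range 5, (m + k).choose 8 * [0, 213, 1983, 2675, 441].getD k 0 := by
    rw [numCycles, card_cyclic_sequences]
    simp only [mul_left_comm _ 8]
    rw [← Finset.mul_sum, Nat.mul_div_cancel_left _ (by norm_num),
      ← Finset.sum_fiberwise_of_maps_to parityShift_lt]
    refine Finset.sum_congr rfl fun k hk => ?_
    rw [← sum_pathCount k hk, Finset.mul_sum]
    refine Finset.sum_congr rfl fun e he => ?_
    rw [(Finset.mem_filter.1 he).2]
  have h1 := cast_factorial_mul_choose_eight (m + 1)
  have h2 := cast_factorial_mul_choose_eight (m + 2)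
  have h3 := cast_factorial_mul_choose_eight (m + 3)
  have h4 := cast_factorial_mul_choose_eight (m + 4)
  rw [hcycles]
  simp only [Finset.sum_range_succ, Finset.sum_range_zero, List.getD_cons_zero,
    List.getD_cons_succ]
  push_cast at h1 h2 h3 h4 ⊢
  linear_combination 4 * 213 * h1 + 4 * 1983 * h2 + 4 * 2675 * h3 + 4 * 441 * h4
end
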